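/- arXiv:1212.5694 — 11 statements merged into one kernel-verified Lean document; each statement's English description precedes it below -/
import Mathlib

section
/- Let R be a commutative ring with 1 ≠ 0 and let X_1,…,X_n ⊆ R be finite nonempty subsets with d_j := |X_j| − 1, X := X_1 × ⋯ × X_n, and N(x) := ∏_{j=1}^n ∏_{x̂ ∈ X_j, x̂ ≠ x_j} (x_j − x̂) for x ∈ X. The following are equivalent: (i) for all j and all distinct x, x̃ ∈ X_j the difference x − x̃ is not a zero divisor in R; (ii) for all x ∈ X, N(x) is not a zero divisor in R; (iii) the evaluation map φ, sending a polynomial P ∈ R[X_1,…,X_n] whose partial degree in X_j is at most d_j for every j to the function X → R, x ↦ P(x), is injective. -/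
open MvPolynomial Finset

/-!
In one variable, `p` vanishes on a set `S` of nodes whose differences are non-zero-divisors exactly
when the monic polynomial `∏ z ∈ S, (X - z)` divides `p`, so a nonzero `p` of degree below `#S`
cannot vanish on `S`. Conversely, if `c * (x - w) = 0` for distinct nodes `x`, `w`, then
`c * ∏ z ∈ S \ {x}, (X - z)` has degree below `#S` and vanishes on `S`, and its leading coefficient
is `c`. The forward direction passes to several variables by induction, viewing a polynomial in
`n + 1` variables as a univariate one; the backward direction passes by regarding a univariate
polynomial as one in the variable `X_j`. The condition on `N(x)` is the condition on differences
because a product is a non-zero-divisor exactly when all its factors are.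
-/

open scoped nonZeroDivisors

section NonZeroDivisors

variable {M ι : Type*} [CommMonoidWithZero M]

theorem prod_mem_nonZeroDivisors_iff {s : Finset ι} {f : ι → M} :
    ∏ i ∈ s, f i ∈ M⁰ ↔ ∀ i ∈ s, f i ∈ M⁰ := by
  classical
  induction s using Finset.induction_on with
  | empty => simp
  | insert i s hi ih => rw [prod_insert hi, mul_mem_nonZeroDivisors, ih, forall_mem_insert]

theorem forall_pi_prod_mem_nonZeroDivisors_iff [Fintype ι] {α : ι → Type*} {s : ∀ i, Set (α i)}
    (hs : ∀ i, (s i).Nonempty) {f : ∀ i, α i → M} :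
    (∀ x : ∀ i, α i, (∀ i, x i ∈ s i) → ∏ i, f i (x i) ∈ M⁰) ↔ ∀ i, ∀ a ∈ s i, f i a ∈ M⁰ := by
  classical
  simp only [prod_mem_nonZeroDivisors_iff, mem_univ, true_imp_iff]
  refine ⟨fun h i a ha => ?_, fun h x hx i => h i (x i) (hx i)⟩
  choose b hb using hs
  have hx : ∀ k, Function.update b i a k ∈ s k :=
    Function.forall_update_iff b (fun k y => y ∈ s k) |>.mpr ⟨ha, fun k _ => hb k⟩
  simpa using h _ hx i

end NonZeroDivisors

theorem degreeOf_aeval_le {R σ : Type*} [CommSemiring R] (i : σ) (Q : MvPolynomial σ R)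
    (p : Polynomial R) : (Polynomial.aeval Q p).degreeOf i ≤ p.natDegree * Q.degreeOf i := by
  rw [Polynomial.aeval_eq_sum_range]
  refine (degreeOf_sum_le _ _ _).trans (Finset.sup_le fun k hk => ?_)
  calc (p.coeff k • Q ^ k).degreeOf i
      ≤ (Q ^ k).degreeOf i := by rw [smul_eq_C_mul]; exact degreeOf_C_mul_le _ _ _
    _ ≤ k * Q.degreeOf i := degreeOf_pow_le _ _ _
    _ ≤ p.natDegree * Q.degreeOf i := by gcongr; exact mem_range_succ_iff.mp hk

section RegularDifferences

variable {R : Type*} [CommRing R] {S T : Finset R} {p : Polynomial R}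

/-- The set `S` has regular differences if distinct elements of `S` differ by a non-zero-divisor.
This is the requirement that integrality of a grid places on each of its factors. -/
def HasRegularDifferences (S : Finset R) : Prop :=
  ∀ x ∈ S, ∀ w ∈ S, x ≠ w → x - w ∈ R⁰

theorem hasRegularDifferences_iff_prod_erase [DecidableEq R] :
    HasRegularDifferences S ↔ ∀ x ∈ S, ∏ z ∈ S.erase x, (x - z) ∈ R⁰ := by
  simp only [HasRegularDifferences, prod_mem_nonZeroDivisors_iff, mem_erase, ne_comm, and_imp]
  exact forall₂_congr fun x _ => forall_congr' fun w => imp.swap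

theorem HasRegularDifferences.mono (hST : S ⊆ T) (hT : HasRegularDifferences T) :
    HasRegularDifferences S :=
  fun x hx w hw => hT x (hST hx) w (hST hw)

theorem HasRegularDifferences.nodal_dvd (hS : HasRegularDifferences S)
    (hp : ∀ x ∈ S, p.eval x = 0) : Lagrange.nodal S id ∣ p := by
  classical
  induction S using Finset.induction_on generalizing p with
  | empty => simp
  | insert a S ha ih =>
    obtain ⟨q, rfl⟩ := Polynomial.dvd_iff_isRoot.mpr (hp a (mem_insert_self a S))
    rw [Lagrange.nodal_insert_eq_nodal ha]
    refine mul_dvd_mul_left _ (ih (hS.mono (subset_insert a S)) fun x hx => ?_)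
    have hxa : x - a ∈ R⁰ :=
      hS x (mem_insert_of_mem hx) a (mem_insert_self a S) (ne_of_mem_of_not_mem hx ha)
    have hprod : (x - a) * q.eval x = 0 := by simpa using hp x (mem_insert_of_mem hx)
    exact (mul_left_mem_nonZeroDivisors_eq_zero_iff hxa).mp hprod

theorem HasRegularDifferences.eq_zero_of_natDegree_lt_card (hS : HasRegularDifferences S)
    (hdeg : p.natDegree < #S) (hp : ∀ x ∈ S, p.eval x = 0) : p = 0 := by
  nontriviality R
  by_contra hne
  exact Lagrange.nodal_monic.not_dvd_of_natDegree_lt hne (by rwa [Lagrange.natDegree_nodal])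
    (hS.nodal_dvd hp)

theorem hasRegularDifferences_of_forall_eq_zero
    (h : ∀ p : Polynomial R, p.natDegree < #S → (∀ x ∈ S, p.eval x = 0) → p = 0) :
    HasRegularDifferences S := by
  classical
  refine fun x hx w hw hxw => mem_nonZeroDivisors_iff_right.mpr fun c hc => ?_
  have : Nontrivial R := ⟨x, w, hxw⟩
  have hdeg : (Polynomial.C c * Lagrange.nodal (S.erase x) id).natDegree < #S :=
    (Polynomial.natDegree_C_mul_le _ _).trans_lt <| by
      rw [Lagrange.natDegree_nodal]
      exact card_erase_lt_of_mem hx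
  have hzero : Polynomial.C c * Lagrange.nodal (S.erase x) id = 0 := h _ hdeg fun y hy => by
    rw [Polynomial.eval_C_mul]
    by_cases hyx : y = x
    · rw [hyx, Lagrange.nodal_eq_mul_nodal_erase (mem_erase.mpr ⟨hxw.symm, hw⟩),
        Polynomial.eval_mul, ← mul_assoc]
      simp [hc]
    · rw [← id_eq y, Lagrange.eval_nodal_at_node (mem_erase.mpr ⟨hyx, hy⟩), mul_zero]
  exact Polynomial.C_eq_zero.mp (Lagrange.nodal_monic.mul_left_eq_zero_iff.mp hzero)

end RegularDifferences

section IntegralGrid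

variable {R σ : Type*} [CommRing R] {X : σ → Finset R} {P Q : MvPolynomial σ R}

/-- The grid `∏ j, X j` is integral if, in each factor, distinct elements differ by a
non-zero-divisor. The grid is encoded by its family of factors. -/
def IsIntegralGrid (X : σ → Finset R) : Prop :=
  ∀ j, HasRegularDifferences (X j)

theorem isIntegralGrid_iff_prod_erase [Fintype σ] [DecidableEq R] (hX : ∀ j, (X j).Nonempty) :
    IsIntegralGrid X ↔ ∀ x : σ → R, (∀ j, x j ∈ X j) →
      ∏ j, ∏ z ∈ (X j).erase (x j), (x j - z) ∈ R⁰ :=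
  (forall_congr' fun _ => hasRegularDifferences_iff_prod_erase).trans
    (forall_pi_prod_mem_nonZeroDivisors_iff (s := fun j => (X j : Set R)) hX
      (f := fun j y => ∏ z ∈ (X j).erase y, (y - z))).symm

theorem IsIntegralGrid.eq_zero_of_eval_eq_zero_fin {n : ℕ} {X : Fin n → Finset R}
    {P : MvPolynomial (Fin n) R} (hX : IsIntegralGrid X) (hdeg : ∀ j, P.degreeOf j < #(X j))
    (hP : ∀ x : Fin n → R, (∀ j, x j ∈ X j) → eval x P = 0) : P = 0 := by
  induction n with
  | zero =>
    rw [eq_C_of_isEmpty P] at hP ⊢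
    simpa using hP finZeroElim finZeroElim
  | succ n ih =>
    refine (map_eq_zero_iff _ (finSuccEquiv R n).injective).mp (Polynomial.ext fun i => ?_)
    refine ih (X := fun j => X j.succ) (fun j => hX j.succ)
      (fun j => (degreeOf_coeff_finSuccEquiv P j i).trans_lt (hdeg j.succ)) fun x hx => ?_
    have hslice : (finSuccEquiv R n P).map (eval x) = 0 := by
      refine (hX 0).eq_zero_of_natDegree_lt_card ?_ fun y hy => ?_
      · exact Polynomial.natDegree_map_le.trans_lt (natDegree_finSuccEquiv P ▸ hdeg 0)
      · rw [← eval_eq_eval_mv_eval']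
        exact hP _ (Fin.cases hy hx)
    rw [← Polynomial.coeff_map, hslice, Polynomial.coeff_zero]

theorem IsIntegralGrid.eq_zero_of_eval_eq_zero (hX : IsIntegralGrid X)
    (hdeg : ∀ j, P.degreeOf j < #(X j))
    (hP : ∀ x : σ → R, (∀ j, x j ∈ X j) → eval x P = 0) : P = 0 := by
  choose b hb using fun j => card_pos.mp ((Nat.zero_le _).trans_lt (hdeg j))
  obtain ⟨n, f, hf, P, rfl⟩ := exists_fin_rename P
  suffices P = 0 by rw [this, map_zero]
  refine eq_zero_of_eval_eq_zero_fin (X := X ∘ f) (fun i => hX (f i))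
    (fun i => degreeOf_rename_of_injective (p := P) hf i ▸ hdeg (f i)) fun x hx => ?_
  have hext : ∀ j, Function.extend f x b j ∈ X j := by
    intro j
    by_cases hj : ∃ i, f i = j
    · obtain ⟨i, rfl⟩ := hj
      rw [hf.extend_apply]
      exact hx i
    · rw [Function.extend_apply' _ _ _ hj]
      exact hb j
  simpa only [eval_rename, Function.extend_comp hf] using hP _ hext

theorem IsIntegralGrid.eq_of_eval_eq (hX : IsIntegralGrid X) (hP : ∀ j, P.degreeOf j < #(X j))
    (hQ : ∀ j, Q.degreeOf j < #(X j))
    (hPQ : ∀ x : σ → R, (∀ j, x j ∈ X j) → eval x P = eval x Q) : P = Q :=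
  sub_eq_zero.mp <| hX.eq_zero_of_eval_eq_zero
    (fun j => (degreeOf_sub_le j P Q).trans_lt (max_lt (hP j) (hQ j)))
    fun x hx => by rw [map_sub, hPQ x hx, sub_self]

theorem isIntegralGrid_of_forall_eq_zero (hX : ∀ j, (X j).Nonempty)
    (h : ∀ P : MvPolynomial σ R, (∀ j, P.degreeOf j < #(X j)) →
      (∀ x : σ → R, (∀ j, x j ∈ X j) → eval x P = 0) → P = 0) : IsIntegralGrid X := by
  refine fun j => hasRegularDifferences_of_forall_eq_zero fun p hdeg hp => ?_
  nontriviality R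
  refine (map_eq_zero_iff _ (Polynomial.toMvPolynomial_injective j)).mp (h _ (fun k => ?_) ?_)
  · refine (degreeOf_aeval_le k (MvPolynomial.X j) p).trans_lt ?_
    obtain rfl | hkj := eq_or_ne k j
    · rwa [degreeOf_X_self, mul_one]
    · rw [degreeOf_X_of_ne hkj, mul_zero]
      exact (hX k).card_pos
  · intro x hx
    rw [eval_toMvPolynomial]
    exact hp (x j) (hx j)

end IntegralGrid

theorem integral_grid_tfae_general {R σ : Type*} [CommRing R] [DecidableEq R] [Fintype σ]
    (X : σ → Finset R) (hX : ∀ j, (X j).Nonempty)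
    (d : σ → ℕ) (hd : ∀ j, d j = #(X j) - 1) :
    List.TFAE [IsIntegralGrid X,
      ∀ x : σ → R, (∀ j, x j ∈ X j) → ∏ j, ∏ z ∈ (X j).erase (x j), (x j - z) ∈ R⁰,
      ∀ P Q : MvPolynomial σ R, (∀ j, P.degreeOf j ≤ d j) → (∀ j, Q.degreeOf j ≤ d j) →
        (∀ x : σ → R, (∀ j, x j ∈ X j) → eval x P = eval x Q) → P = Q] := by
  have hlt (j : σ) (k : ℕ) : k ≤ d j ↔ k < #(X j) := by
    rw [hd, Nat.le_sub_one_iff_lt (hX j).card_pos]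
  simp only [hlt]
  tfae_have 1 ↔ 2 := isIntegralGrid_iff_prod_erase hX
  tfae_have 1 → 3 := fun h P Q hP hQ => h.eq_of_eval_eq hP hQ
  tfae_have 3 → 1 := fun h => isIntegralGrid_of_forall_eq_zero hX fun P hP hP₀ =>
    h P 0 hP (by simpa using fun j => (hX j).card_pos) (by simpa using hP₀)
  tfae_finish

/-- Equivalent characterizations of integral grids: differences are non-zero-divisors
iff all `N(x)` are non-zero-divisors iff evaluation on polynomials of bounded partial
degrees is injective. -/
theorem integral_grid_tfae {R : Type*} [CommRing R] [Nontrivial R] [DecidableEq R] {n : ℕ}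
    (X : Fin n → Finset R) (hX : ∀ j, (X j).Nonempty)
    (d : Fin n → ℕ) (hd : ∀ j, d j = (X j).card - 1) :
    ((∀ j, ∀ x ∈ X j, ∀ w ∈ X j, x ≠ w → x - w ∈ nonZeroDivisors R)
      ↔ (∀ x : Fin n → R, (∀ j, x j ∈ X j) →
          (∏ j, ∏ z ∈ (X j).erase (x j), (x j - z)) ∈ nonZeroDivisors R))
    ∧
    ((∀ x : Fin n → R, (∀ j, x j ∈ X j) →
          (∏ j, ∏ z ∈ (X j).erase (x j), (x j - z)) ∈ nonZeroDivisors R)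
      ↔ (∀ P Q : MvPolynomial (Fin n) R,
          (∀ j, P.degreeOf j ≤ d j) → (∀ j, Q.degreeOf j ≤ d j) →
          (∀ x : Fin n → R, (∀ j, x j ∈ X j) →
            MvPolynomial.eval x P = MvPolynomial.eval x Q) →
          P = Q)) :=
  have h := integral_grid_tfae_general X hX d hd
  ⟨h.out 0 1, h.out 1 2⟩
end

section
/- Let R be a commutative ring and X = X_1 × ⋯ × X_n a d-grid such that N(x) is a unit in R for every x ∈ X (a division grid; e.g. any grid over a field). Then for every polynomial P ∈ R[X_1,…,X_n] with partial degrees deg_{X_j}(P) ≤ d_j for all j, and every multiindex δ with δ_j ≤ d_j for all j, the coefficient of X^δ in P equals Σ_{x ∈ X} ψ_{δ,x} · N(x)^{−1} · P(x). -/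
open MvPolynomial Finset

/-!
Since the differences of distinct nodes are units, the linear polynomials `X - v i` are pairwise
coprime, so Lagrange interpolation works over any commutative ring. Comparing coefficients expresses
each coefficient of a univariate polynomial of small degree through its values at the nodes. On a
monomial `X ^ m`, the sum over the grid factors into such univariate sums, the `j`-th one being `1`
if `m j = δ j` and `0` if `m j ≤ d j` differs from `δ j`. A single vanishing factor kills the
product, so each monomial other than `X ^ δ` needs only one such index `j`.
-/

section Univariate

open Lagrange
open scoped Polynomial

variable {R ι : Type*} [CommRing R] {s : Finset ι} {v : ι → R}

theorem pairwise_isUnit_sub_iff_isUnit_prod_erase [DecidableEq ι] :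
    (s : Set ι).Pairwise (fun i j ↦ IsUnit (v i - v j)) ↔
      ∀ i ∈ s, IsUnit (∏ j ∈ s.erase i, (v i - v j)) := by
  simp only [Set.Pairwise, IsUnit.prod_iff, mem_erase, mem_coe]
  grind

theorem nodal_dvd_of_forall_eval_eq_zero
    (hv : (s : Set ι).Pairwise fun i j ↦ IsUnit (v i - v j)) {p : R[X]}
    (hp : ∀ i ∈ s, p.eval (v i) = 0) : nodal s v ∣ p :=
  prod_dvd_of_coprime
    (fun _ hi _ hj hij ↦ Polynomial.isCoprime_X_sub_C_of_isUnit_sub (hv hi hj hij))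
    fun i hi ↦ Polynomial.dvd_iff_isRoot.2 (hp i hi)

theorem eq_zero_of_degree_lt_card_of_forall_eval_eq_zero
    (hv : (s : Set ι).Pairwise fun i j ↦ IsUnit (v i - v j)) {p : R[X]}
    (hdeg : p.degree < #s) (hp : ∀ i ∈ s, p.eval (v i) = 0) : p = 0 := by
  nontriviality R
  by_contra hne
  exact nodal_monic.not_dvd_of_degree_lt hne (by rwa [degree_nodal])
    (nodal_dvd_of_forall_eval_eq_zero hv hp)

theorem degree_sum_C_mul_nodal_erase_lt [DecidableEq ι] (c : ι → R) :
    (∑ i ∈ s, Polynomial.C (c i) * nodal (s.erase i) v).degree < #s := by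
  nontriviality R
  refine (Polynomial.degree_sum_le _ _).trans_lt
    ((Finset.sup_lt_iff (WithBot.bot_lt_coe _)).2 fun i hi ↦ ?_)
  rw [← Polynomial.smul_eq_C_mul]
  refine (Polynomial.degree_smul_le _ _).trans_lt ?_
  rw [degree_nodal]
  exact_mod_cast card_erase_lt_of_mem hi

theorem eval_sum_C_mul_nodal_erase [DecidableEq ι] (c : ι → R) {i : ι} (hi : i ∈ s) :
    (∑ j ∈ s, Polynomial.C (c j) * nodal (s.erase j) v).eval (v i) =
      c i * ∏ j ∈ s.erase i, (v i - v j) := by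
  simp only [Polynomial.eval_finsetSum, Polynomial.eval_mul, Polynomial.eval_C]
  rw [sum_eq_single_of_mem i hi, eval_nodal]
  intro j _ hji
  rw [eval_nodal_at_node (mem_erase.2 ⟨hji.symm, hi⟩), mul_zero]

theorem eq_sum_C_mul_nodal_erase [DecidableEq ι]
    (hv : (s : Set ι).Pairwise fun i j ↦ IsUnit (v i - v j)) {p : R[X]} (hp : p.degree < #s) :
    p = ∑ i ∈ s, Polynomial.C (Ring.inverse (∏ j ∈ s.erase i, (v i - v j)) * p.eval (v i)) *
      nodal (s.erase i) v := by
  refine sub_eq_zero.1 (eq_zero_of_degree_lt_card_of_forall_eval_eq_zero hv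
    ((Polynomial.degree_sub_le _ _).trans_lt
      (max_lt hp (degree_sum_C_mul_nodal_erase_lt _))) fun i hi ↦ ?_)
  rw [Polynomial.eval_sub, eval_sum_C_mul_nodal_erase _ hi, mul_right_comm,
    Ring.inverse_mul_cancel _ (pairwise_isUnit_sub_iff_isUnit_prod_erase.1 hv i hi),
    one_mul, sub_self]

theorem coeff_nodal {k : ℕ} (hk : k ≤ #s) :
    (nodal s v).coeff k = ∑ t ∈ s.powersetCard (#s - k), ∏ i ∈ t, -v i := by
  simp only [nodal_eq, sub_eq_add_neg, ← Polynomial.C_neg, prod_X_add_C_coeff s _ hk]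

theorem coeff_eq_sum_mul_eval [DecidableEq ι]
    (hv : (s : Set ι).Pairwise fun i j ↦ IsUnit (v i - v j)) {p : R[X]} (hp : p.degree < #s)
    {k : ℕ} (hk : k < #s) :
    p.coeff k = ∑ i ∈ s, (∑ t ∈ (s.erase i).powersetCard (#s - 1 - k), ∏ j ∈ t, -v j) *
      Ring.inverse (∏ j ∈ s.erase i, (v i - v j)) * p.eval (v i) := by
  conv_lhs => rw [eq_sum_C_mul_nodal_erase hv hp, Polynomial.finsetSum_coeff]
  refine sum_congr rfl fun i hi ↦ ?_
  have hcard : #(s.erase i) = #s - 1 := card_erase_of_mem hi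
  rw [Polynomial.coeff_C_mul, coeff_nodal (by omega), hcard]
  ring

end Univariate

theorem isUnit_of_forall_isUnit_prod {ι M : Type*} [Fintype ι] [CommMonoid M] {α : ι → Type*}
    {s : ∀ i, Finset (α i)} {f : ∀ i, α i → M} (hs : ∀ i, (s i).Nonempty)
    (hf : ∀ x : ∀ i, α i, (∀ i, x i ∈ s i) → IsUnit (∏ i, f i (x i)))
    {i : ι} {a : α i} (ha : a ∈ s i) : IsUnit (f i a) := by
  classical
  choose x hx using hs
  have hmem : ∀ j, Function.update x i a j ∈ s j :=
    (Function.forall_update_iff x fun j b ↦ b ∈ s j).2 ⟨ha, fun j _ ↦ hx j⟩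
  simpa using IsUnit.prod_univ_iff.1 (hf _ hmem) i

section Multivariate

variable {R ι : Type*} [Fintype ι] [DecidableEq ι]

theorem sum_piFinset_prod_mul_eval [CommSemiring R] (X : ι → Finset R) (w : ι → R → R)
    (P : MvPolynomial ι R) :
    ∑ x ∈ Fintype.piFinset X, (∏ j, w j (x j)) * eval x P =
      ∑ m ∈ P.support, P.coeff m * ∏ j, ∑ a ∈ X j, w j a * a ^ m j := by
  simp only [eval_eq', mul_sum, prod_univ_sum, prod_mul_distrib]
  rw [sum_comm]
  simp only [mul_left_comm]

theorem coeff_eq_sum_piFinset_of_sum_mul_pow [CommSemiring R] {X : ι → Finset R} {d : ι → ℕ}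
    {w : ι → R → R} {δ : ι →₀ ℕ} (hδ : ∀ j, δ j ≤ d j)
    (hw : ∀ j, ∀ k ≤ d j, ∑ a ∈ X j, w j a * a ^ k = if δ j = k then 1 else 0)
    {P : MvPolynomial ι R} (hP : ∀ m ∈ P.support, m ≠ δ → ∃ j, m j ≠ δ j ∧ m j ≤ d j) :
    P.coeff δ = ∑ x ∈ Fintype.piFinset X, (∏ j, w j (x j)) * eval x P := by
  rw [sum_piFinset_prod_mul_eval, sum_eq_single δ]
  · simp [hw _ _ (hδ _)]
  · intro m hm hne
    obtain ⟨j, hj, hjd⟩ := hP m hm hne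
    rw [prod_eq_zero (mem_univ j), mul_zero]
    rw [hw j _ hjd, if_neg hj.symm]
  · intro h
    rw [notMem_support_iff.1 h, zero_mul]

theorem coeff_formula_division_grid_general [CommRing R] [DecidableEq R]
    (X : ι → Finset R) (d : ι → ℕ) (hd : ∀ j, #(X j) = d j + 1)
    (hN : ∀ x : ι → R, (∀ j, x j ∈ X j) →
      IsUnit (∏ j, ∏ z ∈ (X j).erase (x j), (x j - z)))
    (P : MvPolynomial ι R) (δ : ι →₀ ℕ) (hδ : ∀ j, δ j ≤ d j)
    (hP : ∀ m ∈ P.support, m ≠ δ → ∃ j, m j ≠ δ j ∧ m j ≤ d j) :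
    P.coeff δ = ∑ x ∈ Fintype.piFinset X,
      (∏ j, ∑ Γ ∈ ((X j).erase (x j)).powersetCard (d j - δ j), ∏ γ ∈ Γ, (-γ))
      * Ring.inverse (∏ j, ∏ z ∈ (X j).erase (x j), (x j - z))
      * eval x P := by
  have hne (j : ι) : (X j).Nonempty := card_pos.1 (by simp [hd j])
  have hunit (j : ι) : (X j : Set R).Pairwise fun a b ↦ IsUnit (a - b) :=
    (pairwise_isUnit_sub_iff_isUnit_prod_erase (v := id)).2 fun _ ha ↦
      isUnit_of_forall_isUnit_prod (f := fun j a ↦ ∏ z ∈ (X j).erase a, (a - z)) hne hN ha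
  have hdual (j : ι) (k : ℕ) (hk : k ≤ d j) :
      ∑ a ∈ X j, (∑ Γ ∈ ((X j).erase a).powersetCard (d j - δ j), ∏ γ ∈ Γ, (-γ))
        * Ring.inverse (∏ z ∈ (X j).erase a, (a - z)) * a ^ k = if δ j = k then 1 else 0 := by
    have hdeg : (Polynomial.X ^ k : Polynomial R).degree < #(X j) :=
      (Polynomial.degree_X_pow_le k).trans_lt (by rw [hd j]; exact_mod_cast Nat.lt_succ_of_le hk)
    have hδj : δ j < #(X j) := by grind
    simpa [hd j, Polynomial.coeff_X_pow] using
      (coeff_eq_sum_mul_eval (v := id) (hunit j) hdeg hδj).symm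
  rw [coeff_eq_sum_piFinset_of_sum_mul_pow hδ hdual hP]
  simp only [← MonoidWithZero.inverse_apply, map_prod, prod_mul_distrib]

end Multivariate

/-- Interpolation/coefficient formula over a division grid: for `P` with partial degrees
`≤ d_j` and any `δ ≤ d`, the coefficient of `X^δ` equals
`∑_{x∈X} ψ_{δ,x} N(x)⁻¹ P(x)`. -/
theorem coeff_formula_division_grid {R : Type*} [CommRing R] [DecidableEq R] {n : ℕ}
    (X : Fin n → Finset R) (hX : ∀ j, (X j).Nonempty)
    (d : Fin n → ℕ) (hd : ∀ j, d j = (X j).card - 1)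
    (hN : ∀ x : Fin n → R, (∀ j, x j ∈ X j) →
      IsUnit (∏ j, ∏ z ∈ (X j).erase (x j), (x j - z)))
    (P : MvPolynomial (Fin n) R) (hP : ∀ j, P.degreeOf j ≤ d j)
    (δ : Fin n → ℕ) (hδ : ∀ j, δ j ≤ d j) :
    MvPolynomial.coeff (Finsupp.equivFunOnFinite.symm δ) P
      = ∑ x ∈ Fintype.piFinset X,
          (∏ j, ∑ Γ ∈ ((X j).erase (x j)).powersetCard (d j - δ j), ∏ γ ∈ Γ, (-γ))
          * Ring.inverse (∏ j, ∏ z ∈ (X j).erase (x j), (x j - z))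
          * MvPolynomial.eval x P := by
  exact coeff_formula_division_grid_general X d (fun j ↦ by have := (hX j).card_pos; grind) hN P _
    hδ fun m hm hne ↦ (DFunLike.ne_iff.1 hne).imp fun j hj ↦
      ⟨hj, (monomial_le_degreeOf j hm).trans (hP j)⟩
end

section
/- Let R be a commutative ring and X = X_1 × ⋯ × X_n an integral d-grid (for all j, differences of distinct elements of X_j are non-zero-divisors; e.g. R an integral domain). Let P ∈ R[X_1,…,X_n] and let ε be a d-leading multiindex of P. If the coefficient of X^ε in P is nonzero, then there exists x ∈ X with P(x) ≠ 0. -/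
open MvPolynomial Finset

/-!
The rows of the adjugate of a Vandermonde matrix `V` are weights on the nodes which, summed against
the powers `x ^ k`, give `det V` for one prescribed exponent `k` in the range of the matrix and `0`
for every other one. Taking products of such weights over the coordinates and summing against the
values of `P`, each monomial of `P` other than `X ^ ε` is killed in the coordinate `j` where
`δ j ≠ ε j` and `δ j ≤ d j`. What survives is the coefficient of `X ^ ε` times a product of
Vandermonde determinants, and on an integral grid this product is not a zero divisor.
-/

section Vandermonde

variable {R : Type*} [CommRing R] {m : ℕ}

lemma sum_adjugate_vandermonde_mul_pow (v : Fin m → R) (e k : Fin m) :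
    ∑ a, (Matrix.vandermonde v).adjugate e a * v a ^ (k : ℕ) =
      if e = k then (Matrix.vandermonde v).det else 0 := by
  have entry := congrFun₂ (Matrix.adjugate_mul (Matrix.vandermonde v)) e k
  simpa [Matrix.mul_apply, Matrix.vandermonde_apply, Matrix.one_apply] using entry

lemma det_vandermonde_mem_nonZeroDivisors {v : Fin m → R}
    (hv : Pairwise fun a b ↦ v a - v b ∈ nonZeroDivisors R) :
    (Matrix.vandermonde v).det ∈ nonZeroDivisors R := by
  rw [Matrix.det_vandermonde]
  exact prod_mem fun _ _ ↦ prod_mem fun _ hb ↦ hv (mem_Ioi.mp hb).ne'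

end Vandermonde

lemma sum_prod_mul_eval {R σ : Type*} [CommSemiring R] [Fintype σ] [DecidableEq σ]
    {ι : σ → Type*} [∀ j, Fintype (ι j)] (w v : ∀ j, ι j → R) (P : MvPolynomial σ R) :
    ∑ i : ∀ j, ι j, (∏ j, w j (i j)) * eval (fun j ↦ v j (i j)) P =
      ∑ δ ∈ P.support, coeff δ P * ∏ j, ∑ a, w j a * v j a ^ δ j := by
  simp_rw [eval_eq', Fintype.prod_sum, mul_sum]
  rw [sum_comm]
  refine sum_congr rfl fun δ _ ↦ sum_congr rfl fun i _ ↦ ?_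
  rw [prod_mul_distrib, mul_left_comm]

/-- The multiindex `ε` is `d`-leading in `P`: it is bounded by `d`, and every other multiindex
`δ` occurring in `P` differs from `ε` in some coordinate `j` with `δ j ≤ d j`. -/
structure IsDLeading {R σ : Type*} [CommSemiring R] (d : σ → ℕ) (P : MvPolynomial σ R)
    (ε : σ →₀ ℕ) : Prop where
  le : ∀ j, ε j ≤ d j
  eq_or_exists_ne_le : ∀ δ, coeff δ P ≠ 0 → δ = ε ∨ ∃ j, δ j ≠ ε j ∧ δ j ≤ d j

namespace IsDLeading

lemma of_rename {R σ τ : Type*} [CommSemiring R] {f : σ → τ} (hf : f.Injective) {d : τ → ℕ}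
    {Q : MvPolynomial σ R} {ε : σ →₀ ℕ} (h : IsDLeading d (rename f Q) (ε.mapDomain f)) :
    IsDLeading (d ∘ f) Q ε where
  le j := by simpa [Finsupp.mapDomain_apply hf] using h.le (f j)
  eq_or_exists_ne_le δ hδ := by
    rw [← coeff_rename_mapDomain f hf] at hδ
    refine (h.eq_or_exists_ne_le _ hδ).imp (fun heq ↦ Finsupp.mapDomain_injective hf heq) ?_
    rintro ⟨j, hne, hle⟩
    obtain ⟨i, rfl⟩ : j ∈ Set.range f := by
      by_contra hj
      simp [Finsupp.mapDomain_of_notMem_range _ _ hj] at hne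
    simp only [Finsupp.mapDomain_apply hf] at hne hle
    exact ⟨i, hne, hle⟩

variable {R σ : Type*} [CommRing R] {d : σ → ℕ} {P : MvPolynomial σ R} {ε : σ →₀ ℕ}

theorem sum_adjugate_vandermonde_mul_eval [Fintype σ] [DecidableEq σ] (h : IsDLeading d P ε)
    (v : ∀ j, Fin (d j + 1) → R) :
    ∑ i : ∀ j, Fin (d j + 1),
        (∏ j, (Matrix.vandermonde (v j)).adjugate ⟨ε j, Nat.lt_succ_of_le (h.le j)⟩ (i j)) *
          eval (fun j ↦ v j (i j)) P =
      coeff ε P * ∏ j, (Matrix.vandermonde (v j)).det := by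
  rw [sum_prod_mul_eval, sum_eq_single ε]
  · congr! 2 with j
    simpa using sum_adjugate_vandermonde_mul_pow (v j) ⟨ε j, Nat.lt_succ_of_le (h.le j)⟩
      ⟨ε j, Nat.lt_succ_of_le (h.le j)⟩
  · intro δ hδ hne
    obtain ⟨j, hj, hjd⟩ := (h.eq_or_exists_ne_le δ (mem_support_iff.mp hδ)).resolve_left hne
    have factor_eq_zero := sum_adjugate_vandermonde_mul_pow (v j)
      ⟨ε j, Nat.lt_succ_of_le (h.le j)⟩ ⟨δ j, Nat.lt_succ_of_le hjd⟩
    rw [if_neg (by simpa using hj.symm)] at factor_eq_zero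
    rw [prod_eq_zero (mem_univ j) factor_eq_zero, mul_zero]
  · intro hε
    rw [notMem_support_iff.mp hε, zero_mul]

theorem exists_eval_ne_zero_of_finite [Finite σ] (h : IsDLeading d P ε) (hε : coeff ε P ≠ 0)
    {v : ∀ j, Fin (d j + 1) → R}
    (hv : ∀ j, Pairwise fun a b ↦ v j a - v j b ∈ nonZeroDivisors R) :
    ∃ i : ∀ j, Fin (d j + 1), eval (fun j ↦ v j (i j)) P ≠ 0 := by
  classical
  have := Fintype.ofFinite σ
  by_contra! hzero
  have hdet : ∏ j, (Matrix.vandermonde (v j)).det ∈ nonZeroDivisors R :=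
    prod_mem fun j _ ↦ det_vandermonde_mem_nonZeroDivisors (hv j)
  have hmul : coeff ε P * ∏ j, (Matrix.vandermonde (v j)).det = 0 := by
    simp [← h.sum_adjugate_vandermonde_mul_eval v, hzero]
  exact hε ((mul_right_mem_nonZeroDivisors_eq_zero_iff hdet).mp hmul)

theorem exists_eval_ne_zero (h : IsDLeading d P ε) (hε : coeff ε P ≠ 0)
    {v : ∀ j, Fin (d j + 1) → R}
    (hv : ∀ j, Pairwise fun a b ↦ v j a - v j b ∈ nonZeroDivisors R) :
    ∃ i : ∀ j, Fin (d j + 1), eval (fun j ↦ v j (i j)) P ≠ 0 := by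
  classical
  obtain ⟨s, Q, rfl⟩ := exists_finset_rename P
  obtain ⟨ε, rfl, hQ⟩ := coeff_rename_ne_zero _ _ _ hε
  obtain ⟨i, hi⟩ := (h.of_rename Subtype.val_injective).exists_eval_ne_zero_of_finite hQ
    (v := fun j ↦ v j) fun j ↦ hv j
  refine ⟨fun j ↦ if hj : j ∈ s then i ⟨j, hj⟩ else 0, ?_⟩
  simpa [eval_rename, Function.comp_def] using hi

end IsDLeading

theorem nonzero_of_d_leading_coeff_general {R σ : Type*} [CommRing R] {X : σ → Finset R}
    {d : σ → ℕ} (hd : ∀ j, #(X j) = d j + 1)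
    (hint : ∀ j, (X j : Set R).Pairwise fun x w ↦ x - w ∈ nonZeroDivisors R)
    {P : MvPolynomial σ R} {ε : σ →₀ ℕ} (hlead : IsDLeading d P ε) (hcoeff : coeff ε P ≠ 0) :
    ∃ x : σ → R, (∀ j, x j ∈ X j) ∧ eval x P ≠ 0 := by
  let node (j : σ) := ((X j).equivFinOfCardEq (hd j)).symm
  have hnode (j : σ) :
      Pairwise fun a b ↦ (node j a : R) - node j b ∈ nonZeroDivisors R := fun a b hab ↦
    hint j (node j a).2 (node j b).2 (Subtype.val_injective.ne ((node j).injective.ne hab))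
  obtain ⟨i, hi⟩ := hlead.exists_eval_ne_zero hcoeff hnode
  exact ⟨fun j ↦ node j (i j), fun j ↦ (node j (i j)).2, hi⟩

/-- Combinatorial Nullstellensatz for `d`-leading coefficients over an integral grid:
if the coefficient of `X^ε` is nonzero, then `P` does not vanish on all of `X`. -/
theorem nonzero_of_d_leading_coeff {R : Type*} [CommRing R] {n : ℕ}
    (X : Fin n → Finset R) (hX : ∀ j, (X j).Nonempty)
    (d : Fin n → ℕ) (hd : ∀ j, d j = (X j).card - 1)
    (hint : ∀ j, ∀ x ∈ X j, ∀ w ∈ X j, x ≠ w → x - w ∈ nonZeroDivisors R)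
    (P : MvPolynomial (Fin n) R) (ε : Fin n → ℕ) (hε : ∀ j, ε j ≤ d j)
    (hlead : ∀ δ : Fin n →₀ ℕ, MvPolynomial.coeff δ P ≠ 0 →
      δ = Finsupp.equivFunOnFinite.symm ε ∨ ∃ j, δ j ≠ ε j ∧ δ j ≤ d j)
    (hcoeff : MvPolynomial.coeff (Finsupp.equivFunOnFinite.symm ε) P ≠ 0) :
    ∃ x : Fin n → R, (∀ j, x j ∈ X j) ∧ MvPolynomial.eval x P ≠ 0 := by
  have hcard (j : Fin n) : #(X j) = d j + 1 := by
    rw [hd j, Nat.sub_add_cancel (hX j).card_pos]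
  exact nonzero_of_d_leading_coeff_general hcard (fun j x hx w ↦ hint j x hx w) ⟨hε, hlead⟩ hcoeff
end

section
/- Let R be a commutative ring and X = X_1 × ⋯ × X_n a d-grid such that N(x) is a unit in R for every x ∈ X (e.g. any grid over a field). Let P ∈ R[X_1,…,X_n] have total degree deg(P) ≤ d_1 + ⋯ + d_n. Then the coefficient of the monomial X_1^{d_1}⋯X_n^{d_n} in P equals Σ_{x ∈ X} N(x)^{−1} · P(x). -/
open MvPolynomial Finset

/-!
In one variable, a polynomial `p` of degree at most `#S - 1` equals its Lagrange interpolant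
`∑ x ∈ S, N(x)⁻¹ p(x) ∏ z ∈ S \ {x}, (T - z)`: the differences of distinct nodes are units, so the
monic polynomial `∏ z ∈ S, (T - z)` divides the error, which has smaller degree and hence is `0`.
Comparing top coefficients for `p = T ^ k` shows that the functional `p ↦ ∑ x ∈ S, N(x)⁻¹ p(x)`
vanishes on `T ^ k` for `k < #S - 1` and is `1` for `k = #S - 1`. The functional of a grid is the
tensor product of those of its axes, so on a monomial with exponent `m` it vanishes as soon as some
`m j < d j`, and it is `1` for `m = d`.
-/

section Univariate

variable {R : Type*} [CommRing R]

theorem eq_zero_of_degree_lt_card_of_pairwise_isUnit_sub {S : Finset R}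
    (hS : (S : Set R).Pairwise fun x y ↦ IsUnit (x - y)) {p : Polynomial R}
    (hdeg : p.degree < #S) (hp : ∀ x ∈ S, p.eval x = 0) : p = 0 := by
  nontriviality R
  have nodal_dvd : Lagrange.nodal S id ∣ p :=
    prod_dvd_of_coprime
      (fun _ hx _ hy hxy ↦ Polynomial.isCoprime_X_sub_C_of_isUnit_sub (hS hx hy hxy))
      (fun x hx ↦ Polynomial.dvd_iff_isRoot.2 (hp x hx))
  by_contra hp0
  exact Lagrange.nodal_monic.not_dvd_of_degree_lt hp0 (by rwa [Lagrange.degree_nodal]) nodal_dvd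

variable [DecidableEq R]

/-- The number `N(x)` of a one-dimensional grid `S`, whose inverse is the weight of the node `x` in
Lagrange interpolation on `S`; it is the derivative of `∏ z ∈ S, (T - z)` at `x ∈ S`. -/
def nodeDiffProd (S : Finset R) (x : R) : R :=
  ∏ z ∈ S.erase x, (x - z)

theorem pairwise_isUnit_sub_of_isUnit_nodeDiffProd {S : Finset R}
    (hS : ∀ x ∈ S, IsUnit (nodeDiffProd S x)) :
    (S : Set R).Pairwise fun x y ↦ IsUnit (x - y) :=
  fun x hx y hy hxy ↦ IsUnit.prod_iff.1 (hS x hx) y (mem_erase.2 ⟨hxy.symm, hy⟩)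

theorem eval_nodal_erase_self (S : Finset R) (x : R) :
    (Lagrange.nodal (S.erase x) id).eval x = nodeDiffProd S x :=
  Lagrange.eval_nodal

theorem eval_sum_C_mul_nodal_erase_s6 (S : Finset R) (c : R → R) {x : R} (hx : x ∈ S) :
    (∑ y ∈ S, Polynomial.C (c y) * Lagrange.nodal (S.erase y) id).eval x =
      c x * nodeDiffProd S x := by
  simp only [Polynomial.eval_finsetSum, Polynomial.eval_mul, Polynomial.eval_C]
  rw [sum_eq_single_of_mem x hx, eval_nodal_erase_self]
  intro y _ hyx
  have : (Lagrange.nodal (S.erase y) id).eval x = 0 :=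
    Lagrange.eval_nodal_at_node (v := id) (mem_erase.2 ⟨hyx.symm, hx⟩)
  rw [this, mul_zero]

theorem degree_C_mul_nodal_erase_lt_card {S : Finset R} {x : R} (hx : x ∈ S) (c : R) :
    (Polynomial.C c * Lagrange.nodal (S.erase x) id).degree < #S := by
  nontriviality R
  rw [← Polynomial.smul_eq_C_mul]
  refine (Polynomial.degree_smul_le _ _).trans_lt ?_
  rw [Lagrange.degree_nodal]
  exact_mod_cast card_erase_lt_of_mem hx

theorem eq_sum_C_mul_nodal_erase_s6 {S : Finset R} (hS : ∀ x ∈ S, IsUnit (nodeDiffProd S x))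
    {p : Polynomial R} (hdeg : p.degree < #S) :
    p = ∑ x ∈ S, Polynomial.C (Ring.inverse (nodeDiffProd S x) * p.eval x) *
      Lagrange.nodal (S.erase x) id := by
  rw [← sub_eq_zero]
  refine eq_zero_of_degree_lt_card_of_pairwise_isUnit_sub
    (pairwise_isUnit_sub_of_isUnit_nodeDiffProd hS) ?_ fun x hx ↦ ?_
  · rw [← Polynomial.mem_degreeLT] at hdeg ⊢
    exact sub_mem hdeg <| sum_mem fun x hx ↦
      Polynomial.mem_degreeLT.2 (degree_C_mul_nodal_erase_lt_card hx _)
  · rw [Polynomial.eval_sub, eval_sum_C_mul_nodal_erase_s6 S _ hx, mul_right_comm,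
      Ring.inverse_mul_cancel _ (hS x hx), one_mul, sub_self]

theorem coeff_nodal_erase {S : Finset R} {d : ℕ} (hd : #S = d + 1) {x : R} (hx : x ∈ S) :
    (Lagrange.nodal (S.erase x) id).coeff d = 1 := by
  nontriviality R
  have natDegree_eq : (Lagrange.nodal (S.erase x) id).natDegree = d := by
    rw [Lagrange.natDegree_nodal, card_erase_of_mem hx, hd, Nat.add_sub_cancel]
  simpa only [natDegree_eq] using
    (Lagrange.nodal_monic (s := S.erase x) (v := id)).coeff_natDegree

theorem coeff_eq_sum_inverse_nodeDiffProd_mul_eval {S : Finset R} {d : ℕ} (hd : #S = d + 1)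
    (hS : ∀ x ∈ S, IsUnit (nodeDiffProd S x)) {p : Polynomial R} (hdeg : p.natDegree ≤ d) :
    p.coeff d = ∑ x ∈ S, Ring.inverse (nodeDiffProd S x) * p.eval x := by
  have degree_lt : p.degree < #S := by
    rw [hd]
    exact (Polynomial.degree_le_of_natDegree_le hdeg).trans_lt (by exact_mod_cast d.lt_succ_self)
  conv_lhs => rw [eq_sum_C_mul_nodal_erase_s6 hS degree_lt]
  rw [Polynomial.finsetSum_coeff]
  refine sum_congr rfl fun x hx ↦ ?_
  rw [Polynomial.coeff_C_mul, coeff_nodal_erase hd hx, mul_one]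

theorem sum_inverse_nodeDiffProd_mul_pow {S : Finset R} {d : ℕ} (hd : #S = d + 1)
    (hS : ∀ x ∈ S, IsUnit (nodeDiffProd S x)) {k : ℕ} (hk : k ≤ d) :
    ∑ x ∈ S, Ring.inverse (nodeDiffProd S x) * x ^ k = if d = k then 1 else 0 := by
  have h := coeff_eq_sum_inverse_nodeDiffProd_mul_eval hd hS
    ((Polynomial.natDegree_X_pow_le k).trans hk)
  simpa only [Polynomial.coeff_X_pow, Polynomial.eval_pow, Polynomial.eval_X] using h.symm

end Univariate

section Grid

variable {R : Type*} [CommRing R] [DecidableEq R] {ι : Type*} [Fintype ι]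

/-- The number `N(x)` of the grid with axes `X j`, for a point `x` of that grid. -/
def gridDiffProd (X : ι → Finset R) (x : ι → R) : R :=
  ∏ j, nodeDiffProd (X j) (x j)

theorem inverse_gridDiffProd (X : ι → Finset R) (x : ι → R) :
    Ring.inverse (gridDiffProd X x) = ∏ j, Ring.inverse (nodeDiffProd (X j) (x j)) :=
  map_prod MonoidWithZero.inverse _ _

theorem isUnit_nodeDiffProd_of_isUnit_gridDiffProd {X : ι → Finset R}
    (hX : ∀ j, (X j).Nonempty)
    (hN : ∀ x : ι → R, (∀ j, x j ∈ X j) → IsUnit (gridDiffProd X x))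
    (j : ι) {a : R} (ha : a ∈ X j) : IsUnit (nodeDiffProd (X j) a) := by
  classical
  choose y hy using hX
  have mem_grid : ∀ i, Function.update y j a i ∈ X i :=
    (Function.forall_update_iff y fun i b ↦ b ∈ X i).2 ⟨ha, fun i _ ↦ hy i⟩
  simpa only [Function.update_self] using IsUnit.prod_univ_iff.1 (hN _ mem_grid) j

variable [DecidableEq ι]

theorem sum_inverse_gridDiffProd_mul_prod_pow (X : ι → Finset R) (m : ι → ℕ) :
    ∑ x ∈ Fintype.piFinset X, Ring.inverse (gridDiffProd X x) * ∏ j, x j ^ m j =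
      ∏ j, ∑ a ∈ X j, Ring.inverse (nodeDiffProd (X j) a) * a ^ m j := by
  simp only [prod_univ_sum, inverse_gridDiffProd, prod_mul_distrib]

theorem sum_inverse_gridDiffProd_mul_prod_pow_eq_ite {X : ι → Finset R} {d : ι →₀ ℕ}
    (hd : ∀ j, #(X j) = d j + 1) (hX : ∀ j, ∀ a ∈ X j, IsUnit (nodeDiffProd (X j) a))
    {m : ι →₀ ℕ} (hm : d ≤ m → m = d) :
    ∑ x ∈ Fintype.piFinset X, Ring.inverse (gridDiffProd X x) * ∏ j, x j ^ m j =
      if m = d then 1 else 0 := by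
  rw [sum_inverse_gridDiffProd_mul_prod_pow]
  split_ifs with hmd
  · subst hmd
    exact prod_eq_one fun j _ ↦
      (sum_inverse_nodeDiffProd_mul_pow (hd j) (hX j) le_rfl).trans (if_pos rfl)
  · obtain ⟨j, hj⟩ : ∃ j, m j < d j := by
      simpa only [Finsupp.le_def, not_forall, not_le] using mt hm hmd
    exact prod_eq_zero (mem_univ j) <|
      (sum_inverse_nodeDiffProd_mul_pow (hd j) (hX j) hj.le).trans (if_neg hj.ne')

theorem coeff_formula_main_general {X : ι → Finset R} {d : ι →₀ ℕ}
    (hd : ∀ j, #(X j) = d j + 1)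
    (hN : ∀ x : ι → R, (∀ j, x j ∈ X j) → IsUnit (gridDiffProd X x))
    {P : MvPolynomial ι R} (hP : ∀ m ∈ P.support, d ≤ m → m = d) :
    P.coeff d = ∑ x ∈ Fintype.piFinset X, Ring.inverse (gridDiffProd X x) * eval x P := by
  have hX : ∀ j, (X j).Nonempty := fun j ↦ card_pos.1 (by rw [hd]; exact Nat.succ_pos _)
  have hunit := fun j a ↦ isUnit_nodeDiffProd_of_isUnit_gridDiffProd hX hN j (a := a)
  symm
  calc ∑ x ∈ Fintype.piFinset X, Ring.inverse (gridDiffProd X x) * eval x P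
      = ∑ m ∈ P.support, P.coeff m *
          ∑ x ∈ Fintype.piFinset X, Ring.inverse (gridDiffProd X x) * ∏ j, x j ^ m j := by
        simp only [eval_eq', mul_sum, mul_left_comm (P.coeff _)]
        exact sum_comm
    _ = ∑ m ∈ P.support, P.coeff m * if m = d then 1 else 0 :=
        sum_congr rfl fun m hm ↦ by
          rw [sum_inverse_gridDiffProd_mul_prod_pow_eq_ite hd hunit (hP m hm)]
    _ = P.coeff d := by
        simp only [mul_ite, mul_one, mul_zero, sum_ite_eq', mem_support_iff, ite_not]
        exact ite_eq_right_iff.2 Eq.symm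

end Grid

theorem eq_of_mem_support_of_le_of_totalDegree_le {σ R : Type*} [CommSemiring R]
    {P : MvPolynomial σ R} {d m : σ →₀ ℕ} (hP : P.totalDegree ≤ d.degree)
    (hm : m ∈ P.support) (hdm : d ≤ m) : m = d := by
  have degree_le : m.degree ≤ d.degree := (le_totalDegree hm).trans hP
  obtain ⟨e, rfl⟩ := exists_add_of_le hdm
  have degree_eq_zero : e.degree = 0 := by
    rw [map_add] at degree_le
    omega
  rw [(Finsupp.degree_eq_zero_iff e).1 degree_eq_zero, add_zero]

/-- Coefficient formula over a division grid: if `deg(P) ≤ Σ d_j`, then the coefficient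
of `X_1^{d_1}⋯X_n^{d_n}` in `P` equals `∑_{x∈X} N(x)⁻¹ P(x)`. -/
theorem coeff_formula_main {R : Type*} [CommRing R] [DecidableEq R] {n : ℕ}
    (X : Fin n → Finset R) (hX : ∀ j, (X j).Nonempty)
    (d : Fin n → ℕ) (hd : ∀ j, d j = (X j).card - 1)
    (hN : ∀ x : Fin n → R, (∀ j, x j ∈ X j) →
      IsUnit (∏ j, ∏ z ∈ (X j).erase (x j), (x j - z)))
    (P : MvPolynomial (Fin n) R) (hdeg : P.totalDegree ≤ ∑ j, d j) :
    MvPolynomial.coeff (Finsupp.equivFunOnFinite.symm d) P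
      = ∑ x ∈ Fintype.piFinset X,
          Ring.inverse (∏ j, ∏ z ∈ (X j).erase (x j), (x j - z))
          * MvPolynomial.eval x P := by
  have card_eq : ∀ j, #(X j) = d j + 1 := fun j ↦ by
    rw [hd, Nat.sub_add_cancel (hX j).card_pos]
  have totalDegree_le : P.totalDegree ≤ (Finsupp.equivFunOnFinite.symm d).degree := by
    rwa [Finsupp.degree_eq_sum]
  exact coeff_formula_main_general card_eq hN fun _ ↦
    eq_of_mem_support_of_le_of_totalDegree_le totalDegree_le
end

section
/- Let p be a prime, q = p^k, and let X = X_1 × ⋯ × X_n ⊆ (F_q)^n be a d-grid (X_j ⊆ F_q finite nonempty, d_j := |X_j| − 1). Let P_1,…,P_m ∈ F_q[X_1,…,X_n] satisfy (q − 1) · Σ_{i=1}^m deg(P_i) < d_1 + ⋯ + d_n. Then the number of points x ∈ X with P_1(x) = ⋯ = P_m(x) = 0 is not equal to 1. -/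
open MvPolynomial Finset

/-!
In one variable, Lagrange interpolation on a finite set `S` expresses the coefficient of
`X ^ (#S - 1)` as a weighted sum of values with nonzero weights, so this weighted sum vanishes on
polynomials of smaller degree. Multiplying the weights over the coordinates gives nonzero weights
on a grid which annihilate every polynomial of total degree less than `∑ j, (#(S j) - 1)`: each of
its monomials has a small exponent in some coordinate. Applied to the Chevalley–Warning polynomial
`∏ i, (1 - P i ^ (q - 1))`, the indicator of the common zeros, this says that the weights of the
common zeros in the grid sum to zero; a single nonzero weight cannot.
-/

section Grid

variable {F ι σ : Type*} [Field F]

theorem sum_nodalWeight_mul_eval_eq_zero [DecidableEq ι] {s : Finset ι} {v : ι → F}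
    (hvs : Set.InjOn v s) {f : Polynomial F} (hf : f.natDegree < #s - 1) :
    ∑ i ∈ s, Lagrange.nodalWeight s v i * f.eval (v i) = 0 := by
  have hdeg : f.degree < #s :=
    Polynomial.degree_le_natDegree.trans_lt (by exact_mod_cast hf.trans_le (Nat.sub_le _ _))
  calc
    _ = ∑ i ∈ s, f.eval (v i) / ∏ j ∈ s.erase i, (v i - v j) :=
      sum_congr rfl fun i _ ↦ by
        rw [Lagrange.nodalWeight, prod_inv_distrib, div_eq_inv_mul]
    _ = f.coeff (#s - 1) := (Lagrange.coeff_eq_sum hvs hdeg).symm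
    _ = 0 := Polynomial.coeff_eq_zero_of_natDegree_lt hf

variable [Fintype σ] [DecidableEq F]

/-- The product over the coordinates of the barycentric Lagrange weights of `x j` among the nodes
`S j`. The sum over the grid `∏ j, S j` with these weights extracts the coefficient of
`∏ j, X j ^ (#(S j) - 1)` from a polynomial of degree less than `#(S j)` in each `X j`. -/
def gridWeight (S : σ → Finset F) (x : σ → F) : F :=
  ∏ j, Lagrange.nodalWeight (S j) id (x j)

theorem gridWeight_ne_zero {S : σ → Finset F} {x : σ → F} (hx : ∀ j, x j ∈ S j) :
    gridWeight S x ≠ 0 :=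
  prod_ne_zero_iff.mpr fun j _ ↦ Lagrange.nodalWeight_ne_zero Function.injective_id.injOn (hx j)

variable [DecidableEq σ]

theorem sum_gridWeight_mul_prod_pow (S : σ → Finset F) (e : σ → ℕ) :
    ∑ x ∈ Fintype.piFinset S, gridWeight S x * ∏ j, x j ^ e j =
      ∏ j, ∑ a ∈ S j, Lagrange.nodalWeight (S j) id a * a ^ e j := by
  simp only [gridWeight, ← prod_mul_distrib, prod_univ_sum]

theorem sum_gridWeight_mul_prod_pow_eq_zero {S : σ → Finset F} {e : σ → ℕ}
    (he : ∑ j, e j < ∑ j, (#(S j) - 1)) :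
    ∑ x ∈ Fintype.piFinset S, gridWeight S x * ∏ j, x j ^ e j = 0 := by
  obtain ⟨j, -, hj⟩ := exists_lt_of_sum_lt he
  rw [sum_gridWeight_mul_prod_pow]
  refine prod_eq_zero (mem_univ j) ?_
  have hdeg : (Polynomial.X ^ e j : Polynomial F).natDegree < #(S j) - 1 := by
    rwa [Polynomial.natDegree_X_pow]
  simpa using sum_nodalWeight_mul_eval_eq_zero Function.injective_id.injOn hdeg

theorem sum_gridWeight_mul_eval_eq_zero {S : σ → Finset F} {f : MvPolynomial σ F}
    (hf : f.totalDegree < ∑ j, (#(S j) - 1)) :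
    ∑ x ∈ Fintype.piFinset S, gridWeight S x * eval x f = 0 := by
  simp only [eval_eq', mul_sum, mul_left_comm (gridWeight S _)]
  rw [sum_comm]
  refine sum_eq_zero fun e he ↦ ?_
  have hdeg : ∑ j, e j < ∑ j, (#(S j) - 1) := by
    rw [← Finsupp.degree_eq_sum]
    exact (le_totalDegree he).trans_lt hf
  rw [← mul_sum, sum_gridWeight_mul_prod_pow_eq_zero hdeg, mul_zero]

end Grid

section ChevalleyWarning

variable {F ι σ : Type*} [Field F] [Fintype F]

/-- The Chevalley–Warning polynomial of the family `P i`, `i ∈ s`, over a finite field: as a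
function it is the indicator of the common zeros of the family. -/
noncomputable def zerosIndicator (s : Finset ι) (P : ι → MvPolynomial σ F) : MvPolynomial σ F :=
  ∏ i ∈ s, (1 - P i ^ (Fintype.card F - 1))

theorem totalDegree_zerosIndicator_le (s : Finset ι) (P : ι → MvPolynomial σ F) :
    (zerosIndicator s P).totalDegree ≤ (Fintype.card F - 1) * ∑ i ∈ s, (P i).totalDegree := by
  rw [mul_sum]
  refine (totalDegree_finsetProd _ _).trans (sum_le_sum fun i _ ↦ ?_)
  calc
    (1 - P i ^ (Fintype.card F - 1)).totalDegree
        ≤ max (1 : MvPolynomial σ F).totalDegree (P i ^ (Fintype.card F - 1)).totalDegree :=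
      totalDegree_sub _ _
    _ = (P i ^ (Fintype.card F - 1)).totalDegree := by rw [totalDegree_one, Nat.zero_max]
    _ ≤ (Fintype.card F - 1) * (P i).totalDegree := totalDegree_pow _ _

theorem eval_zerosIndicator [DecidableEq F] (s : Finset ι) (P : ι → MvPolynomial σ F)
    (x : σ → F) :
    eval x (zerosIndicator s P) = if ∀ i ∈ s, eval x (P i) = 0 then 1 else 0 := by
  simp only [zerosIndicator, eval_prod, map_sub, map_one, map_pow]
  split_ifs with hx
  · have hq : Fintype.card F - 1 ≠ 0 := Nat.sub_ne_zero_of_lt Fintype.one_lt_card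
    exact prod_eq_one fun i hi ↦ by rw [hx i hi, zero_pow hq, sub_zero]
  · push Not at hx
    obtain ⟨i, hi, hne⟩ := hx
    exact prod_eq_zero hi (by rw [FiniteField.pow_card_sub_one_eq_one _ hne, sub_self])

variable [Fintype σ]

theorem sum_gridWeight_zeros_eq_zero [DecidableEq F] [DecidableEq σ] {S : σ → Finset F}
    {s : Finset ι} {P : ι → MvPolynomial σ F}
    (h : (Fintype.card F - 1) * ∑ i ∈ s, (P i).totalDegree < ∑ j, (#(S j) - 1)) :
    ∑ x ∈ Fintype.piFinset S with ∀ i ∈ s, eval x (P i) = 0, gridWeight S x = 0 := by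
  simpa only [eval_zerosIndicator, mul_ite, mul_one, mul_zero, ← sum_filter] using
    sum_gridWeight_mul_eval_eq_zero ((totalDegree_zerosIndicator_le s P).trans_lt h)

theorem chevalley_warning_grid_general (S : σ → Finset F) (s : Finset ι)
    (P : ι → MvPolynomial σ F)
    (h : (Fintype.card F - 1) * ∑ i ∈ s, (P i).totalDegree < ∑ j, (#(S j) - 1)) :
    {x : σ → F | (∀ j, x j ∈ S j) ∧ ∀ i ∈ s, eval x (P i) = 0}.ncard ≠ 1 := by
  classical
  intro hone
  obtain ⟨x, hx⟩ := Set.ncard_eq_one.mp hone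
  have hzeros : ({y ∈ Fintype.piFinset S | ∀ i ∈ s, eval y (P i) = 0} : Finset (σ → F)) = {x} := by
    rw [← coe_inj, coe_singleton, ← hx]
    simp only [coe_filter, Fintype.mem_piFinset]
  have hmem : ∀ j, x j ∈ S j := (hx.ge rfl).1
  refine gridWeight_ne_zero hmem ?_
  rw [← sum_singleton (gridWeight S) x, ← hzeros, sum_gridWeight_zeros_eq_zero h]

end ChevalleyWarning

/-- Chevalley–Warning type result on grids: over a finite field with `p^k` elements,
a system of polynomials with `(p^k − 1) Σ deg(P_i) < Σ d_j` does not have exactly one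
common zero in the grid. -/
theorem chevalley_warning_grid {F : Type*} [Field F] [Fintype F]
    (p k : ℕ) (hp : p.Prime) (hk : 0 < k) (hcard : Fintype.card F = p ^ k)
    {n m : ℕ}
    (X : Fin n → Finset F) (hX : ∀ j, (X j).Nonempty)
    (d : Fin n → ℕ) (hd : ∀ j, d j = (X j).card - 1)
    (P : Fin m → MvPolynomial (Fin n) F)
    (hdeg : (p ^ k - 1) * ∑ i, (P i).totalDegree < ∑ j, d j) :
    {x : Fin n → F | (∀ j, x j ∈ X j) ∧ ∀ i, MvPolynomial.eval x (P i) = 0}.ncard ≠ 1 := by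
  simp only [← hcard, hd] at hdeg
  simpa only [mem_univ, forall_const] using chevalley_warning_grid_general X univ P hdeg
end

section
/- Let V be a finite set of vertices and Ē a finite set of edges with endpoint maps h, t : Ē → V such that h(e) ≠ t(e) for every e ∈ Ē (a loopless multigraph), and let e₀ ∈ Ē be a distinguished edge such that in the multigraph with edge set E := Ē ∖ {e₀} every vertex v ∈ V has degree exactly 4 (i.e. |{e ∈ E : h(e) = v}| + |{e ∈ E : t(e) = v}| = 4). Then there exists a nonempty subset S ⊆ Ē such that every vertex v ∈ V is incident to exactly 0 or exactly 3 edges of S (i.e. |{e ∈ S : h(e) = v}| + |{e ∈ S : t(e) = v}| ∈ {0, 3}). -/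
open Finset

/-!
Over a finite field with `q` elements, `x ^ (q - 1)` is the indicator of `x ≠ 0`. Hence a nonzero
solution of the equations `∑ i, a i k * x i ^ (q - 1) = 0`, which the Chevalley–Warning theorem
provides as soon as there are more than `q - 1` variables per equation, has as its support a
nonempty zero-sum subfamily of the vectors `a i`. Apply this to the incidence vectors of the edges
of a multigraph modulo a prime `p`: all degrees of the resulting subgraph are divisible by `p`, so
they are `0` or `p` if the original degrees are less than `2 * p`. A 4-regular multigraph plus an
edge that is not a loop has `2 * |V| + 1` edges and degrees at most `5`, which is the case `p = 3`.
-/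

section ZeroSum

variable {K ι κ : Type*} [Field K] [Fintype ι] [Fintype κ]

lemma exists_ne_zero_forall_eval_eq_zero [Finite K] (f : κ → MvPolynomial ι K)
    (hdeg : ∑ k, (f k).totalDegree < Fintype.card ι)
    (hconst : ∀ k, MvPolynomial.constantCoeff (f k) = 0) :
    ∃ x : ι → K, x ≠ 0 ∧ ∀ k, MvPolynomial.eval x (f k) = 0 := by
  classical
  have := Fintype.ofFinite K
  obtain ⟨p, _⟩ := CharP.exists K
  have hp : p.Prime := CharP.char_is_prime K p
  let zero : {x : ι → K // ∀ k, MvPolynomial.eval x (f k) = 0} :=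
    ⟨0, by simpa only [MvPolynomial.eval_zero] using hconst⟩
  have hdvd := char_dvd_card_solutions_of_fintype_sum_lt p hdeg
  have hcard := hp.one_lt.trans_le (Nat.le_of_dvd (Fintype.card_pos_iff.mpr ⟨zero⟩) hdvd)
  obtain ⟨⟨x, hx⟩, hne⟩ := Fintype.exists_ne_of_one_lt_card hcard zero
  exact ⟨x, fun hx0 ↦ hne (Subtype.ext hx0), hx⟩

lemma exists_nonempty_sum_eq_zero [Fintype K] (a : ι → κ → K)
    (hcard : (Fintype.card K - 1) * Fintype.card κ < Fintype.card ι) :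
    ∃ S : Finset ι, S.Nonempty ∧ ∑ i ∈ S, a i = 0 := by
  classical
  set q := Fintype.card K
  have hq : q - 1 ≠ 0 := Nat.sub_ne_zero_of_lt Fintype.one_lt_card
  let f (k : κ) : MvPolynomial ι K := ∑ i, MvPolynomial.C (a i k) * MvPolynomial.X i ^ (q - 1)
  have hdeg : ∑ k, (f k).totalDegree < Fintype.card ι := calc
    ∑ k, (f k).totalDegree ≤ ∑ _k : κ, (q - 1) := by
      refine sum_le_sum fun k _ ↦ MvPolynomial.totalDegree_finsetSum_le fun i _ ↦ ?_
      rw [← MvPolynomial.smul_eq_C_mul]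
      exact (MvPolynomial.totalDegree_smul_le _ _).trans (MvPolynomial.totalDegree_X_pow _ _).le
    _ = (q - 1) * Fintype.card κ := by rw [sum_const, card_univ, smul_eq_mul, mul_comm]
    _ < Fintype.card ι := hcard
  obtain ⟨x, hx0, hx⟩ := exists_ne_zero_forall_eval_eq_zero f hdeg fun k ↦ by simp [f, hq]
  obtain ⟨i, hi⟩ := Function.ne_iff.mp hx0
  have pow_eq_indicator (y : K) : y ^ (q - 1) = if y ≠ 0 then 1 else 0 := by
    split_ifs with hy
    · exact FiniteField.pow_card_sub_one_eq_one y hy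
    · rw [not_not.mp hy, zero_pow hq]
  refine ⟨univ.filter (x · ≠ 0), ⟨i, by simpa using hi⟩, funext fun k ↦ ?_⟩
  calc
    (∑ i with x i ≠ 0, a i) k = ∑ i, a i k * x i ^ (q - 1) := by
      simp only [Finset.sum_apply, pow_eq_indicator, mul_ite, mul_one, mul_zero, sum_filter]
    _ = MvPolynomial.eval x (f k) := by simp [f]
    _ = 0 := hx k

end ZeroSum

section Multigraph

variable {V E : Type*} [DecidableEq V] (h t : E → V)

/-- The degree of the vertex `v` in the multigraph with edge set `S` and endpoint maps `h` and `t`.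
A loop at `v` contributes `2`. -/
def multigraphDegree (S : Finset E) (v : V) : ℕ := #{e ∈ S | h e = v} + #{e ∈ S | t e = v}

lemma multigraphDegree_mono (v : V) : Monotone (multigraphDegree h t · v) := fun _ _ hST ↦
  add_le_add (card_le_card (filter_subset_filter _ hST)) (card_le_card (filter_subset_filter _ hST))

lemma sum_multigraphDegree [Fintype V] (S : Finset E) :
    ∑ v, multigraphDegree h t S v = 2 * #S := by
  simp only [multigraphDegree, sum_add_distrib, sum_card_fiberwise_eq_card_filter, mem_univ,
    filter_true, two_mul]

lemma card_eq_of_forall_multigraphDegree_eq [Fintype V] {S : Finset E} {k : ℕ}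
    (hreg : ∀ v, multigraphDegree h t S v = 2 * k) : #S = k * Fintype.card V := by
  have hsum := sum_multigraphDegree h t S
  simp only [hreg, sum_const, card_univ, smul_eq_mul] at hsum
  linarith

variable {h t} in
lemma multigraphDegree_le_erase_add_one [DecidableEq E] {e : E} (he : h e ≠ t e) (S : Finset E)
    (v : V) : multigraphDegree h t S v ≤ multigraphDegree h t (S.erase e) v + 1 := by
  have card_le (s : Finset E) : #s ≤ #(s.erase e) + 1 :=
    Nat.sub_le_iff_le_add.mp pred_card_le_card_erase
  have card_eq (g : E → V) (hg : g e ≠ v) :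
      #({i ∈ S | g i = v}.erase e) = #{i ∈ S | g i = v} :=
    congrArg card (erase_eq_of_notMem fun hmem ↦ hg (mem_filter.mp hmem).2)
  simp only [multigraphDegree, filter_erase]
  by_cases hv : h e = v
  · rw [card_eq t fun ht ↦ he (hv.trans ht.symm), add_right_comm]
    gcongr
    exact card_le _
  · rw [card_eq h hv, add_assoc]
    gcongr
    exact card_le _

theorem regular_subgraph_exists_general [Fintype V] [Fintype E] {p : ℕ} [Fact p.Prime]
    (hcard : (p - 1) * Fintype.card V < Fintype.card E)
    (hdeg : ∀ v, multigraphDegree h t univ v < 2 * p) :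
    ∃ S : Finset E, S.Nonempty ∧
      ∀ v, multigraphDegree h t S v = 0 ∨ multigraphDegree h t S v = p := by
  obtain ⟨S, hS, hsum⟩ := exists_nonempty_sum_eq_zero
    (fun e ↦ (Pi.single (h e) 1 + Pi.single (t e) 1 : V → ZMod p)) (by rwa [ZMod.card])
  refine ⟨S, hS, fun v ↦ ?_⟩
  have hdvd : p ∣ multigraphDegree h t S v := by
    rw [← ZMod.natCast_eq_zero_iff]
    simpa [multigraphDegree, sum_add_distrib, Pi.single_apply, eq_comm] using congrFun hsum v
  have hlt : multigraphDegree h t S v < 2 * p :=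
    (multigraphDegree_mono h t v (subset_univ S)).trans_lt (hdeg v)
  obtain ⟨k, hk⟩ := hdvd
  have hk2 : k < 2 := by
    rw [hk, mul_comm] at hlt
    exact lt_of_mul_lt_mul_right hlt p.zero_le
  interval_cases k
  · exact .inl hk
  · exact .inr (by rwa [mul_one] at hk)

end Multigraph

/-- Every loopless 4-regular multigraph plus one extra edge contains a nontrivial
3-regular subgraph: there is a nonempty edge set `S` such that every vertex is
incident to exactly 0 or exactly 3 edges of `S`. -/
theorem regular_subgraph_exists {V E : Type*} [Fintype V] [Fintype E]
    [DecidableEq V] [DecidableEq E]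
    (h t : E → V) (hloop : ∀ e, h e ≠ t e) (e₀ : E)
    (hreg : ∀ v : V,
      (Finset.univ.filter (fun e => e ≠ e₀ ∧ h e = v)).card
        + (Finset.univ.filter (fun e => e ≠ e₀ ∧ t e = v)).card = 4) :
    ∃ S : Finset E, S.Nonempty ∧ ∀ v : V,
      (S.filter (fun e => h e = v)).card + (S.filter (fun e => t e = v)).card = 0
      ∨ (S.filter (fun e => h e = v)).card + (S.filter (fun e => t e = v)).card = 3 := by
  have hreg' (v : V) : multigraphDegree h t (univ.erase e₀) v = 4 := by
    simpa only [multigraphDegree, ← filter_ne', filter_filter] using hreg v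
  have hcard : 2 * Fintype.card V < Fintype.card E :=
    card_eq_of_forall_multigraphDegree_eq h t (k := 2) hreg' ▸
      card_lt_univ_of_notMem (notMem_erase e₀ univ)
  have hdeg (v : V) : multigraphDegree h t univ v ≤ 4 + 1 :=
    hreg' v ▸ multigraphDegree_le_erase_add_one (hloop e₀) univ v
  exact regular_subgraph_exists_general h t (p := 3) hcard fun v ↦ Nat.lt_succ_of_le (hdeg v)
end

section
/- Let F be a field, n, m ∈ ℕ, and for i = 1,…,m let H_i = { x ∈ F^n : Σ_{j=1}^n a_{ij} x_j = b_i } be an affine hyperplane in F^n (so (a_{i1},…,a_{in}) ≠ 0). Suppose there is exactly one vertex x₀ of the unit cube {0,1}^n ⊆ F^n not covered, i.e. {0,1}^n ∖ (H_1 ∪ ⋯ ∪ H_m) = {x₀}. Then m ≥ n. -/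
open Finset

/-!
Let `p` be the product of the affine forms defining the hyperplanes; its degree is at most the
number of hyperplanes, and on the grid `∏ i, S i` (the cube when every `S i` is `{0, 1}`) it
vanishes everywhere except at `x₀`. So does
`q = ∏ i, ∏ s ∈ S i \ {x₀ i}, (X i - s)`, whose leading monomial `∏ i, X i ^ (#(S i) - 1)` is the
largest one that the Combinatorial Nullstellensatz allows on this grid. If `deg p < deg q`, the
combination `p(x₀) q - q(x₀) p` vanishes on the whole grid while keeping that leading monomial with
coefficient `p(x₀) ≠ 0`, contradicting the Nullstellensatz.
-/

section Grid

open MvPolynomial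

variable {R ι κ : Type*} [CommRing R] [Fintype ι] [Fintype κ]

/-- The product of the linear polynomials `X i - s` over all `i` and all `s ∈ T i`: it vanishes
at the points having some coordinate `x i` in `T i`, and serves as the extremal polynomial that is
nonzero at a single point of a grid. -/
noncomputable def gridPolynomial (T : ι → Finset R) : MvPolynomial ι R :=
  ∏ i, ∏ s ∈ T i, (X i - C s)

theorem eval_gridPolynomial_eq_zero_iff [IsDomain R] {T : ι → Finset R} {x : ι → R} :
    eval x (gridPolynomial T) = 0 ↔ ∃ i, x i ∈ T i := by
  simp [gridPolynomial, prod_eq_zero_iff, sub_eq_zero]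

theorem monic_gridPolynomial (m : MonomialOrder ι) (T : ι → Finset R) :
    m.Monic (gridPolynomial T) :=
  .prod fun i _ ↦ .prod fun s _ ↦ m.monic_X_sub_C i s

theorem degree_gridPolynomial [Nontrivial R] (m : MonomialOrder ι) (T : ι → Finset R) :
    m.degree (gridPolynomial T) = ∑ i, Finsupp.single i #(T i) := by
  have monic_factor (i : ι) : m.Monic (∏ s ∈ T i, (X i - C s)) :=
    .prod fun s _ ↦ m.monic_X_sub_C i s
  rw [gridPolynomial, m.degree_prod_of_regular fun i _ ↦ by
    rw [monic_factor i]; exact isRegular_one]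
  refine sum_congr rfl fun i _ ↦ ?_
  rw [m.degree_prod_of_regular fun s _ ↦ by rw [m.monic_X_sub_C]; exact isRegular_one]
  simp [m.degree_X_sub_C]

theorem coeff_gridPolynomial [Nontrivial R] (T : ι → Finset R) :
    (gridPolynomial T).coeff (∑ i, Finsupp.single i #(T i)) = 1 := by
  let : LinearOrder ι := WellOrderingRel.isWellOrder.linearOrder
  rw [← degree_gridPolynomial MonomialOrder.lex]
  exact monic_gridPolynomial MonomialOrder.lex T

theorem totalDegree_gridPolynomial [Nontrivial R] (T : ι → Finset R) :
    (gridPolynomial T).totalDegree = ∑ i, #(T i) := by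
  let : LinearOrder ι := WellOrderingRel.isWellOrder.linearOrder
  rw [← degree_degLexDegree, degree_gridPolynomial]
  simp

theorem exists_mul_eval_gridPolynomial_ne_eval [IsDomain R] {S T : ι → Finset R}
    (hTS : ∀ i, #(T i) < #(S i)) {p : MvPolynomial ι R} (hp : p.totalDegree < ∑ i, #(T i))
    {c : R} (hc : c ≠ 0) :
    ∃ x : ι → R, (∀ i, x i ∈ S i) ∧ c * eval x (gridPolynomial T) ≠ eval x p := by
  classical
  set t : ι →₀ ℕ := ∑ i, Finsupp.single i #(T i) with ht
  have degree_t : t.degree = ∑ i, #(T i) := by simp [ht]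
  set f : MvPolynomial ι R := c • gridPolynomial T - p with hf
  have coeff_f : f.coeff t = c := by
    have coeff_p : p.coeff t = 0 := coeff_eq_zero_of_totalDegree_lt (by
      rwa [← Finsupp.degree_apply, degree_t])
    rw [hf, coeff_sub, coeff_p, sub_zero, coeff_smul, coeff_gridPolynomial, smul_eq_mul, mul_one]
  have totalDegree_f : f.totalDegree = t.degree := by
    refine le_antisymm ?_ (le_totalDegree (mem_support_iff.2 (coeff_f ▸ hc)))
    rw [degree_t]
    exact (totalDegree_sub _ _).trans <| max_le
      ((totalDegree_smul_le _ _).trans (totalDegree_gridPolynomial T).le) hp.le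
  have t_lt (i : ι) : t i < #(S i) := by
    simpa [ht, Finsupp.finsetSum_apply, Finsupp.single_apply] using hTS i
  obtain ⟨x, hxS, hx⟩ := combinatorial_nullstellensatz_exists_eval_nonzero f t
    (coeff_f ▸ hc) totalDegree_f S t_lt
  exact ⟨x, hxS, by simpa [hf, sub_eq_zero] using hx⟩

theorem sum_card_sub_one_le_totalDegree [IsDomain R] {S : ι → Finset R} {p : MvPolynomial ι R}
    {x₀ : ι → R} (h : ∀ x, ((∀ i, x i ∈ S i) ∧ eval x p ≠ 0) ↔ x = x₀) :
    ∑ i, (#(S i) - 1) ≤ p.totalDegree := by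
  classical
  obtain ⟨hx₀, hp₀⟩ := (h x₀).2 rfl
  let T (i : ι) : Finset R := (S i).erase (x₀ i)
  have card_T (i : ι) : #(T i) = #(S i) - 1 := card_erase_of_mem (hx₀ i)
  simp_rw [← card_T]
  by_contra! hlt
  let q₀ : R := eval x₀ (gridPolynomial T)
  obtain ⟨x, hxS, hx⟩ := exists_mul_eval_gridPolynomial_ne_eval
    (fun i ↦ card_erase_lt_of_mem (hx₀ i)) ((totalDegree_smul_le q₀ p).trans_lt hlt) hp₀
  rw [smul_eval] at hx
  rcases eq_or_ne x x₀ with rfl | hne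
  · exact hx (mul_comm _ _)
  · obtain ⟨i, hi⟩ := Function.ne_iff.1 hne
    have hq : eval x (gridPolynomial T) = 0 :=
      eval_gridPolynomial_eq_zero_iff.2 ⟨i, mem_erase.2 ⟨hi, hxS i⟩⟩
    have hp : eval x p = 0 := by
      by_contra hp
      exact hne ((h x).1 ⟨hxS, hp⟩)
    exact hx (by rw [hq, hp, mul_zero, mul_zero])

theorem totalDegree_affineForm_le_one (a : ι → R) (b : R) :
    (∑ j, C (a j) * X j - C b).totalDegree ≤ 1 := by
  refine (totalDegree_sub_C_le _ _).trans (totalDegree_finsetSum_le fun j _ ↦ ?_)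
  rw [C_mul_X_eq_monomial]
  simpa using totalDegree_monomial_le (Finsupp.single j 1) (a j)

theorem cube_covering_general [IsDomain R] (S : ι → Finset R) (a : κ → ι → R) (b : κ → R)
    (x₀ : ι → R)
    (hcover : ∀ x : ι → R, ((∀ j, x j ∈ S j) ∧ ∀ i, ∑ j, a i j * x j ≠ b i) ↔ x = x₀) :
    ∑ j, (#(S j) - 1) ≤ Fintype.card κ := by
  let p : MvPolynomial ι R := ∏ i, (∑ j, C (a i j) * X j - C (b i))
  have eval_p_ne_zero (x : ι → R) : eval x p ≠ 0 ↔ ∀ i, ∑ j, a i j * x j ≠ b i := by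
    simp [p, prod_eq_zero_iff, sub_eq_zero]
  calc ∑ j, (#(S j) - 1)
    _ ≤ p.totalDegree :=
      sum_card_sub_one_le_totalDegree fun x ↦ by rw [eval_p_ne_zero, hcover]
    _ ≤ ∑ i, (∑ j, C (a i j) * X j - C (b i)).totalDegree := totalDegree_finsetProd _ _
    _ ≤ ∑ _i : κ, 1 := sum_le_sum fun i _ ↦ totalDegree_affineForm_le_one (a i) (b i)
    _ = Fintype.card κ := by simp

end Grid

/-- Alon–Füredi: if `m` affine hyperplanes in `F^n` cover all vertices of the unit cube
`{0,1}^n` except exactly one, then `m ≥ n`. -/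
theorem cube_covering {F : Type*} [Field F] (n m : ℕ)
    (a : Fin m → Fin n → F) (b : Fin m → F) (ha : ∀ i, a i ≠ 0)
    (x₀ : Fin n → F)
    (hcover : ∀ x : Fin n → F,
      ((∀ j, x j = 0 ∨ x j = 1) ∧ ∀ i, ∑ j, a i j * x j ≠ b i) ↔ x = x₀) :
    n ≤ m := by
  classical
  simpa using cube_covering_general (fun _ ↦ {0, 1}) a b x₀ (by simpa using hcover)
end

section
/- Let G be a loopless directed multigraph with finite vertex set V, finite edge set E, and head and tail maps h, t : E → V with h(e) ≠ t(e) for all e. Let F be a field, and for each v ∈ V let X_v ⊆ F be a finite nonempty set with d_v := |X_v| − 1; suppose |E| ≤ Σ_{v∈V} d_v. Call a map σ : E → V with σ(e) ∈ {h(e), t(e)} for all e an orientation; it is a d-orientation if |σ^{−1}(v)| = d_v for all v ∈ V, and it is even (resp. odd) if the number of edges e with σ(e) = t(e) is even (resp. odd). Let DE_d and DO_d denote the sets of even and odd d-orientations. Then: (i) (|DE_d| − |DO_d|), cast into F, equals Σ_{x ∈ ∏_v X_v} N(x)^{−1} · ∏_{e ∈ E} ( x_{h(e)} − x_{t(e)}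 ), where N(x) := ∏_{v∈V} ∏_{x̂ ∈ X_v, x̂ ≠ x_v} (x_v − x̂); and (ii) if this element of F is nonzero, then there exists x ∈ ∏_v X_v with x_{h(e)} ≠ x_{t(e)} for every e ∈ E (a proper coloring from the lists X_v). -/
open Finset

/-!
The sum in (i) is an interpolation formula. On a list of `k + 1` points, weighting each point by its
Lagrange nodal weight and summing kills the powers below `k` and sends the `k`-th power to `1`.
Taking products over the vertices, the weighted sum of the values of a polynomial of total degree at
most `∑ v, d v` on the grid of lists is its coefficient at `∏ v, X v ^ d v`. Expanding the graph
polynomial `∏ e, (X (h e) - X (t e))` amounts to choosing an orientation, with one factor `-1` for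
each edge directed to its tail, so this coefficient counts the `d`-orientations with sign.
-/

section Interpolation

open Lagrange MvPolynomial

theorem sum_nodalWeight_mul_pow {ι F : Type*} [DecidableEq ι] [Field F] {s : Finset ι} {v : ι → F}
    (hv : Set.InjOn v s) {n k : ℕ} (hs : #s = n + 1) (hk : k ≤ n) :
    ∑ i ∈ s, nodalWeight s v i * v i ^ k = if k = n then 1 else 0 := by
  have hdeg : (Polynomial.X ^ k : Polynomial F).degree < #s := by
    rw [Polynomial.degree_X_pow, hs]
    exact_mod_cast Nat.lt_succ_of_le hk
  calc ∑ i ∈ s, nodalWeight s v i * v i ^ k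
      = (Polynomial.X ^ k : Polynomial F).coeff (#s - 1) := by
        rw [Lagrange.coeff_eq_sum hv hdeg]
        simp [nodalWeight, div_eq_inv_mul]
    _ = if k = n then 1 else 0 := by
        simp [Polynomial.coeff_X_pow, hs, eq_comm]

variable {ι F : Type*} [Fintype ι] [DecidableEq ι] [Field F] [DecidableEq F]
  {S : ι → Finset F} {d : ι →₀ ℕ}

theorem sum_prod_nodalWeight_mul_prod_pow (hS : ∀ i, #(S i) = d i + 1) {m : ι →₀ ℕ}
    (hm : d ≤ m → m = d) :
    ∑ x ∈ Fintype.piFinset S, (∏ i, nodalWeight (S i) id (x i)) * ∏ i, x i ^ m i =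
      if m = d then 1 else 0 := by
  have factor :
      ∑ x ∈ Fintype.piFinset S, (∏ i, nodalWeight (S i) id (x i)) * ∏ i, x i ^ m i =
        ∏ i, ∑ z ∈ S i, nodalWeight (S i) id z * z ^ m i := by
    simp only [prod_univ_sum, prod_mul_distrib]
  have factor_eq (i : ι) (hi : m i ≤ d i) :
      ∑ z ∈ S i, nodalWeight (S i) id z * z ^ m i = if m i = d i then 1 else 0 :=
    sum_nodalWeight_mul_pow Function.injective_id.injOn (hS i) hi
  rw [factor]
  split_ifs with hmd
  · subst hmd
    exact prod_eq_one fun i _ => by rw [factor_eq i le_rfl, if_pos rfl]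
  · obtain ⟨i, hi⟩ : ∃ i, m i < d i := by
      simpa [Finsupp.le_def] using mt hm hmd
    exact prod_eq_zero (mem_univ i) (by rw [factor_eq i hi.le, if_neg hi.ne])

theorem coeff_eq_sum_prod_nodalWeight_mul_eval (hS : ∀ i, #(S i) = d i + 1)
    {p : MvPolynomial ι F} (hp : ∀ m ∈ p.support, d ≤ m → m = d) :
    p.coeff d = ∑ x ∈ Fintype.piFinset S, (∏ i, nodalWeight (S i) id (x i)) * eval x p := by
  symm
  calc ∑ x ∈ Fintype.piFinset S, (∏ i, nodalWeight (S i) id (x i)) * eval x p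
      = ∑ m ∈ p.support, p.coeff m * ∑ x ∈ Fintype.piFinset S,
          (∏ i, nodalWeight (S i) id (x i)) * ∏ i, x i ^ m i := by
        simp only [eval_eq', mul_sum, mul_left_comm]
        exact sum_comm
    _ = ∑ m ∈ p.support, p.coeff m * if m = d then 1 else 0 :=
        sum_congr rfl fun m hm => by rw [sum_prod_nodalWeight_mul_prod_pow hS (hp m hm)]
    _ = p.coeff d := by simp +contextual [eq_comm]

theorem coeff_eq_sum_prod_nodalWeight_mul_eval_of_totalDegree_le (hS : ∀ i, #(S i) = d i + 1)
    {p : MvPolynomial ι F} (hp : p.totalDegree ≤ d.degree) :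
    p.coeff d = ∑ x ∈ Fintype.piFinset S, (∏ i, nodalWeight (S i) id (x i)) * eval x p := by
  refine coeff_eq_sum_prod_nodalWeight_mul_eval hS fun m hm hdm => ?_
  have hle : m.degree ≤ d.degree := (le_totalDegree hm).trans hp
  obtain ⟨c, rfl⟩ := exists_add_of_le hdm
  have hc : c.degree = 0 := by
    rw [map_add] at hle
    omega
  rw [(Finsupp.degree_eq_zero_iff c).1 hc, add_zero]

end Interpolation

theorem sum_neg_one_pow_eq_card_even_sub_card_odd {ι R : Type*} [Ring R] (s : Finset ι)
    (f : ι → ℕ) :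
    ∑ i ∈ s, (-1 : R) ^ f i = #{i ∈ s | Even (f i)} - #{i ∈ s | Odd (f i)} := by
  simp only [← Nat.not_even_iff_odd]
  rw [← sum_filter_add_sum_filter_not s fun i => Even (f i),
    sum_congr rfl fun i hi => (mem_filter.1 hi).2.neg_one_pow,
    sum_congr rfl fun i hi => (Nat.not_even_iff_odd.1 (mem_filter.1 hi).2).neg_one_pow]
  simp [sub_eq_add_neg]

section GraphPolynomial

open MvPolynomial

variable {V E : Type*} [Fintype E]

/-- The graph polynomial `∏ e, (X (h e) - X (t e))` of the directed multigraph with head and tail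
maps `h` and `t`. -/
noncomputable def graphPolynomial (R : Type*) [CommRing R] (h t : E → V) : MvPolynomial V R :=
  ∏ e, (X (h e) - X (t e))

/-- The in-degrees of an orientation `σ`, which directs each edge `e` towards `σ e`; a finitely
supported function, so that it can serve as the exponent of a monomial. -/
noncomputable def inDegree (σ : E → V) : V →₀ ℕ :=
  ∑ e, Finsupp.single (σ e) 1

/-- The orientations of the directed multigraph with head and tail maps `h` and `t`: the maps
choosing one endpoint of each edge. -/
def orientations [DecidableEq V] [DecidableEq E] (h t : E → V) : Finset (E → V) :=
  Fintype.piFinset fun e => {h e, t e}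

theorem inDegree_apply [DecidableEq V] (σ : E → V) (v : V) : inDegree σ v = #{e | σ e = v} := by
  simp [inDegree, Finsupp.single_apply]

theorem orientations_eq_filter [Fintype V] [DecidableEq V] [DecidableEq E] (h t : E → V) :
    orientations h t = univ.filter fun σ : E → V => ∀ e, σ e = h e ∨ σ e = t e := by
  ext σ
  simp [orientations]

variable {R : Type*} [CommRing R]

theorem eval_graphPolynomial (h t : E → V) (x : V → R) :
    eval x (graphPolynomial R h t) = ∏ e, (x (h e) - x (t e)) := by
  simp [graphPolynomial]

theorem isHomogeneous_graphPolynomial (h t : E → V) :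
    (graphPolynomial R h t).IsHomogeneous (Fintype.card E) := by
  simpa [graphPolynomial] using IsHomogeneous.prod univ _ (fun _ => 1) fun e _ =>
    (isHomogeneous_X R (h e)).sub (isHomogeneous_X R (t e))

variable [DecidableEq V] [DecidableEq E] {h t : E → V}

theorem graphPolynomial_eq_sum_orientations (hloop : ∀ e, h e ≠ t e) :
    graphPolynomial R h t =
      ∑ σ ∈ orientations h t, monomial (inDegree σ) ((-1) ^ #{e | σ e = t e}) := by
  have edge (e : E) : (X (h e) - X (t e) : MvPolynomial V R) =
      ∑ v ∈ {h e, t e}, monomial (Finsupp.single v 1) (if v = t e then -1 else 1) := by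
    simp [sum_pair (hloop e), hloop e, X, sub_eq_add_neg]
  simp only [graphPolynomial, edge, prod_univ_sum, orientations, inDegree,
    ← monomial_sum_prod, prod_ite, prod_const, one_pow, mul_one]

theorem coeff_graphPolynomial (hloop : ∀ e, h e ≠ t e) (d : V →₀ ℕ) :
    (graphPolynomial R h t).coeff d =
      #{σ ∈ orientations h t | inDegree σ = d ∧ Even #{e | σ e = t e}} -
        #{σ ∈ orientations h t | inDegree σ = d ∧ Odd #{e | σ e = t e}} := by
  rw [graphPolynomial_eq_sum_orientations hloop, coeff_sum]
  simp only [coeff_monomial, ← sum_filter,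
    sum_neg_one_pow_eq_card_even_sub_card_odd, filter_filter]

end GraphPolynomial

/-- Alon–Tarsi theorem for list colorings: (i) the difference between the numbers of
even and odd `d`-orientations, cast into `F`, equals
`∑_{x ∈ X} N(x)⁻¹ ∏_{e ∈ E} (x_{h(e)} − x_{t(e)})`; and (ii) if this element of `F` is
nonzero, there is a proper coloring from the lists. -/
theorem alon_tarsi {V E : Type*} [Fintype V] [Fintype E] [DecidableEq V] [DecidableEq E]
    (h t : E → V) (hloop : ∀ e, h e ≠ t e)
    {F : Type*} [Field F] [DecidableEq F]
    (X : V → Finset F) (hX : ∀ v, (X v).Nonempty)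
    (d : V → ℕ) (hd : ∀ v, d v = (X v).card - 1)
    (hE : Fintype.card E ≤ ∑ v, d v) :
    ((((Finset.univ.filter (fun σ : E → V =>
          (∀ e, σ e = h e ∨ σ e = t e)
          ∧ (∀ v, (Finset.univ.filter (fun e => σ e = v)).card = d v)
          ∧ Even (Finset.univ.filter (fun e => σ e = t e)).card)).card : ℤ)
      - ((Finset.univ.filter (fun σ : E → V =>
          (∀ e, σ e = h e ∨ σ e = t e)
          ∧ (∀ v, (Finset.univ.filter (fun e => σ e = v)).card = d v)
          ∧ Odd (Finset.univ.filter (fun e => σ e = t e)).card)).card : ℤ) : ℤ) : F)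
      = ∑ x ∈ Fintype.piFinset X,
          (∏ v, ∏ z ∈ (X v).erase (x v), (x v - z))⁻¹
            * ∏ e, (x (h e) - x (t e))
    ∧
    ((∑ x ∈ Fintype.piFinset X,
          (∏ v, ∏ z ∈ (X v).erase (x v), (x v - z))⁻¹
            * ∏ e, (x (h e) - x (t e))) ≠ 0 →
      ∃ x : V → F, (∀ v, x v ∈ X v) ∧ ∀ e, x (h e) ≠ x (t e)) := by
  have hcard (v : V) : #(X v) = d v + 1 := by
    have := (hX v).card_pos
    have := hd v
    omega
  have hdegree : (graphPolynomial F h t).totalDegree ≤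
      (Finsupp.equivFunOnFinite.symm d).degree :=
    (isHomogeneous_graphPolynomial h t).totalDegree_le.trans <| by
      simpa [Finsupp.degree_eq_sum] using hE
  have signed_count := coeff_eq_sum_prod_nodalWeight_mul_eval_of_totalDegree_le hcard hdegree
  rw [coeff_graphPolynomial hloop] at signed_count
  refine ⟨?_, fun hne => ?_⟩
  · simpa [orientations_eq_filter, filter_filter, Finsupp.ext_iff, inDegree_apply,
      eval_graphPolynomial, Lagrange.nodalWeight] using signed_count
  · obtain ⟨x, hx, hx0⟩ := exists_ne_zero_of_sum_ne_zero hne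
    exact ⟨x, Fintype.mem_piFinset.1 hx, fun e =>
      sub_ne_zero.1 (prod_ne_zero_iff.1 (right_ne_zero_of_mul hx0) e (mem_univ e))⟩
end

section
/- Let m ≥ 2 be a composite natural number (not prime), n ≥ 1, and assume (m, n) ≠ (4, 1). Then for every polynomial P ∈ (ℤ/mℤ)[X_1,…,X_n], the number of points x ∈ (ℤ/mℤ)^n with P(x) ≠ 0 is not equal to 1. -/
open MvPolynomial

/-!
Let `a` be the only point where `P` does not vanish, put `c = P(a)`, and let `L` be the linear part
of `P` at `a`. Then `t²` divides `c + t L(v)` whenever `t v ≠ 0`, so every nonzero `t` divides `c`.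
If the ring `R` is not a field, this forces `c² = 0`, and taking `t = c` gives `c + c L(v) = 0`
whenever `c v ≠ 0`. For `v = eᵢ, eⱼ, eᵢ + eⱼ` with `i ≠ j` this contradicts the linearity of `L`,
so there is only one variable. In one variable, write `d = L(1)`. Every nonzero `t` with `c t = 0`
has `t² = 0`, hence `c + t d = 0`; applied to `t`, `c` and `t - c`, this shows that the annihilator
of `c` is `{0, c}`. The ideal `(c)` is also `{0, c}`, so `R` has `2 · 2 = 4` elements.
-/

section SqDvd

variable {R : Type*} [CommRing R] {c d : R}

theorem sq_eq_zero_of_forall_ne_zero_dvd (hR : ¬ IsField R) (h : ∀ t : R, t ≠ 0 → t ∣ c) :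
    c ^ 2 = 0 := by
  by_contra hsq
  obtain ⟨b, hb⟩ := h _ hsq
  have hinv : c * b = 1 := by
    by_contra hne
    obtain ⟨s, hs⟩ := h (1 - c * b) (sub_ne_zero.2 (Ne.symm hne))
    exact hsq (by linear_combination c * hs + s * hb)
  have : Nontrivial R := nontrivial_of_ne _ _ hsq
  refine hR ⟨exists_pair_ne R, mul_comm, fun {t} ht ↦ ?_⟩
  exact isUnit_iff_exists_inv.1 (isUnit_of_dvd_unit (h t ht) (.of_mul_eq_one b hinv))

variable (h : ∀ t : R, t ≠ 0 → t ^ 2 ∣ c + t * d)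

include h

theorem dvd_of_sq_dvd_add_mul {t : R} (ht : t ≠ 0) : t ∣ c :=
  (dvd_add_left (dvd_mul_right t d)).1 ((dvd_pow_self t two_ne_zero).trans (h t ht))

theorem add_mul_eq_zero_of_sq_eq_zero {t : R} (ht : t ≠ 0) (htsq : t ^ 2 = 0) :
    c + t * d = 0 :=
  zero_dvd_iff.1 (htsq ▸ h t ht)

theorem mul_eq_zero_or_eq_self_of_sq_dvd_add_mul (hsq : c ^ 2 = 0) (r : R) :
    c * r = 0 ∨ c * r = c := by
  refine or_iff_not_imp_left.2 fun hr ↦ ?_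
  have hcd : c + c * d = 0 := add_mul_eq_zero_of_sq_eq_zero h (left_ne_zero_of_mul hr) hsq
  have hcrd : c + c * r * d = 0 :=
    add_mul_eq_zero_of_sq_eq_zero h hr (by rw [mul_pow, hsq, zero_mul])
  linear_combination r * hcd - hcrd

theorem sq_eq_zero_of_mul_eq_zero_of_sq_dvd_add_mul (hc : c ≠ 0) (hsq : c ^ 2 = 0)
    {t : R} (hct : c * t = 0) : t ^ 2 = 0 := by
  by_contra htsq
  have ht : t ≠ 0 := ne_zero_pow two_ne_zero htsq
  obtain ⟨s, hs⟩ : t ^ 2 ∣ c := dvd_of_sq_dvd_add_mul h htsq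
  obtain ⟨k, hk⟩ := h t ht
  have hcd : c + c * d = 0 := add_mul_eq_zero_of_sq_eq_zero h hc hsq
  -- `t (t k - d) = c` and `c = t² s`, hence `c (t k - d) = t s c = 0`
  apply hc
  linear_combination hcd - (d - t * k) * hs - t * s * hk + (s - k) * hct

theorem eq_of_mul_eq_zero_of_sq_dvd_add_mul (hc : c ≠ 0) (hsq : c ^ 2 = 0)
    {t : R} (ht : t ≠ 0) (hct : c * t = 0) : t = c := by
  have add_mul_eq_zero {u : R} (hu : u ≠ 0) (hcu : c * u = 0) : c + u * d = 0 :=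
    add_mul_eq_zero_of_sq_eq_zero h hu <|
      sq_eq_zero_of_mul_eq_zero_of_sq_dvd_add_mul h hc hsq hcu
  have hcc : c * c = 0 := by rw [← sq, hsq]
  by_contra hne
  have hdiff := add_mul_eq_zero (sub_ne_zero.2 hne) (by rw [mul_sub, hct, hcc, sub_zero])
  exact hc (by linear_combination hdiff - add_mul_eq_zero ht hct + add_mul_eq_zero hc hcc)

theorem card_eq_four_of_sq_dvd_add_mul (hc : c ≠ 0) (hsq : c ^ 2 = 0) : Nat.card R = 4 := by
  let f : R →+ R := AddMonoidHom.mulLeft c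
  have hker : (f.ker : Set R) = {0, c} := by
    ext t
    refine ⟨fun hct ↦ or_iff_not_imp_left.2 fun ht ↦ ?_, ?_⟩
    · exact eq_of_mul_eq_zero_of_sq_dvd_add_mul h hc hsq ht hct
    · rintro (rfl | rfl)
      exacts [mul_zero c, (sq t).symm.trans hsq]
  have hrange : (f.range : Set R) = {0, c} := by
    ext t
    refine ⟨?_, ?_⟩
    · rintro ⟨r, rfl⟩
      exact mul_eq_zero_or_eq_self_of_sq_dvd_add_mul h hsq r
    · rintro (rfl | rfl)
      exacts [⟨0, mul_zero c⟩, ⟨1, mul_one t⟩]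
  calc Nat.card R = Nat.card f.ker * Nat.card f.range := by
        rw [← AddSubgroup.index_ker, AddSubgroup.card_mul_index]
    _ = (f.ker : Set R).ncard * (f.range : Set R).ncard := rfl
    _ = 4 := by rw [hker, hrange, Set.ncard_pair hc.symm]

end SqDvd

section LinearPart

variable {R σ : Type*} [CommRing R]

theorem exists_linearMap_sq_dvd_eval_add_smul_sub (P : MvPolynomial σ R) (a : σ → R) :
    ∃ L : (σ → R) →ₗ[R] R, ∀ (t : R) (v : σ → R),
      t ^ 2 ∣ eval (a + t • v) P - (eval a P + t * L v) := by
  induction P using MvPolynomial.induction_on with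
  | C r => exact ⟨0, fun t v ↦ by simp⟩
  | add p q hp hq =>
    obtain ⟨L, hL⟩ := hp
    obtain ⟨M, hM⟩ := hq
    refine ⟨L + M, fun t v ↦ ?_⟩
    convert dvd_add (hL t v) (hM t v) using 1
    simp only [map_add, LinearMap.add_apply]
    ring
  | mul_X p j hp =>
    obtain ⟨L, hL⟩ := hp
    refine ⟨a j • L + eval a p • LinearMap.proj j, fun t v ↦ ?_⟩
    obtain ⟨k, hk⟩ := hL t v
    refine ⟨k * (a j + t * v j) + L v * v j, ?_⟩
    simp only [map_mul, eval_X, Pi.add_apply, Pi.smul_apply, smul_eq_mul, LinearMap.add_apply,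
      LinearMap.smul_apply, LinearMap.proj_apply]
    linear_combination (a j + t * v j) * hk

theorem exists_linearMap_sq_dvd_eval_add_mul {P : MvPolynomial σ R} {a : σ → R}
    (hP : ∀ x, x ≠ a → eval x P = 0) :
    ∃ L : (σ → R) →ₗ[R] R, ∀ (t : R) (v : σ → R), t • v ≠ 0 → t ^ 2 ∣ eval a P + t * L v := by
  obtain ⟨L, hL⟩ := exists_linearMap_sq_dvd_eval_add_smul_sub P a
  refine ⟨L, fun t v htv ↦ ?_⟩
  simpa only [hP _ (add_ne_left.2 htv), zero_sub, dvd_neg] using hL t v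

theorem subsingleton_of_add_mul_eq_zero {c : R} (hc : c ≠ 0) (L : (σ → R) →+ R)
    (h : ∀ v : σ → R, c • v ≠ 0 → c + c * L v = 0) : Subsingleton σ := by
  classical
  refine ⟨fun i j ↦ by_contra fun hij ↦ hc ?_⟩
  have add_mul_eq_zero (v : σ → R) (k : σ) (hvk : v k = 1) : c + c * L v = 0 :=
    h v fun hcv ↦ hc (by simpa [hvk] using congrFun hcv k)
  have hi := add_mul_eq_zero (Pi.single i 1) i (by simp)
  have hj := add_mul_eq_zero (Pi.single j 1) j (by simp)
  have hadd := add_mul_eq_zero (Pi.single i 1 + Pi.single j 1) i (by simp [hij])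
  rw [map_add] at hadd
  linear_combination hi + hj - hadd

end LinearPart

theorem zmod_not_exactly_one_nonzero_general {R σ : Type*} [CommRing R] [Nonempty σ]
    (hR : ¬ IsField R) (hRσ : (Nat.card R, Nat.card σ) ≠ (4, 1)) (P : MvPolynomial σ R) :
    {x : σ → R | eval x P ≠ 0}.ncard ≠ 1 := by
  classical
  intro hcard
  obtain ⟨a, ha⟩ := Set.ncard_eq_one.1 hcard
  have hne (x : σ → R) : eval x P ≠ 0 ↔ x = a := Set.ext_iff.1 ha x
  have hc : eval a P ≠ 0 := (hne a).2 rfl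
  obtain ⟨L, hL⟩ :=
    exists_linearMap_sq_dvd_eval_add_mul fun x hx ↦ not_not.1 (mt (hne x).1 hx)
  obtain ⟨i⟩ := ‹Nonempty σ›
  have hLi (t : R) (ht : t ≠ 0) : t ^ 2 ∣ eval a P + t * L (Pi.single i 1) :=
    hL t _ fun hti ↦ ht (by simpa using congrFun hti i)
  have hsq : eval a P ^ 2 = 0 :=
    sq_eq_zero_of_forall_ne_zero_dvd hR fun _ ht ↦ dvd_of_sq_dvd_add_mul hLi ht
  have : Subsingleton σ :=
    subsingleton_of_add_mul_eq_zero hc L.toAddMonoidHom fun v hv ↦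
      zero_dvd_iff.1 (hsq ▸ hL _ v hv)
  have hσ : Nat.card σ = 1 := Nat.card_eq_one_iff_unique.2 ⟨this, ⟨i⟩⟩
  exact hRσ (Prod.ext (card_eq_four_of_sq_dvd_add_mul hLi hc hsq) hσ)

theorem not_isField_zmod {m : ℕ} (hm : ¬ m.Prime) : ¬ IsField (ZMod m) := by
  intro h
  have : IsDomain (ZMod m) := h.isDomain
  rcases CharP.char_is_prime_or_zero (ZMod m) m with hprime | rfl
  exacts [hm hprime, Int.not_isField h]

/-- Over `ℤ/mℤ` with `m` composite and `(m,n) ≠ (4,1)`, no polynomial has exactly one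
nonvanishing point in `(ℤ/mℤ)^n`. -/
theorem zmod_not_exactly_one_nonzero (m n : ℕ) (hm : 2 ≤ m) (hcomp : ¬ m.Prime)
    (hn : 1 ≤ n) (hmn : (m, n) ≠ (4, 1))
    (P : MvPolynomial (Fin n) (ZMod m)) :
    {x : Fin n → ZMod m | MvPolynomial.eval x P ≠ 0}.ncard ≠ 1 := by
  have : Nonempty (Fin n) := Fin.pos_iff_nonempty.1 hn
  exact zmod_not_exactly_one_nonzero_general (not_isField_zmod hcomp) (by simpa using hmn) P
end

section
/- Let p be a prime, k > 0 a natural number, and set c := Σ_{i=0}^{k−1} (p^i − 1). Then for every integer y: (i) p^c divides ∏_{ŷ=1}^{p^k − 1} (y − ŷ); and (ii) p^{c+1} does not divide ∏_{ŷ=1}^{p^k − 1} (y − ŷ) if and only if p^k divides y. -/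
open Finset

/-!
Write `P` for the product and `c` for the sum. Legendre's formula gives `(p ^ k - 1)!` the
`p`-adic valuation `c` and `(p ^ k)!` the valuation `c + k`. A product of `n` consecutive integers
is divisible by `n!`; applied to `P` this is (i). Applied to the `p ^ k` consecutive factors of
`y * P`, it gives `p ^ (c + k) ∣ y * P`, so `p ^ k ∣ y` unless `p ^ (c + 1) ∣ P`. Conversely, if
`p ^ k ∣ y`, then every factor `y - z` has the valuation of `z`, hence `P` that of `(p ^ k - 1)!`.
-/

section Prime

theorem pow_dvd_of_pow_add_dvd_mul {M : Type*} [CommMonoidWithZero M] [IsCancelMulZero M]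
    {p a b : M} {c k : ℕ} (hp : Prime p) (hab : p ^ (c + k) ∣ a * b) (hb : ¬ p ^ (c + 1) ∣ b) :
    p ^ k ∣ a := by
  rw [pow_dvd_iff_le_emultiplicity, emultiplicity_mul hp] at hab
  have hbc : emultiplicity p b ≤ c := by
    rw [← emultiplicity_lt_iff_not_dvd, Nat.cast_add_one] at hb
    exact Order.le_of_lt_add_one hb
  have hck : (c : ℕ∞) + k ≤ c + emultiplicity p a :=
    calc (c : ℕ∞) + k
      _ ≤ emultiplicity p a + emultiplicity p b := by exact_mod_cast hab
      _ ≤ emultiplicity p a + c := by gcongr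
      _ = c + emultiplicity p a := add_comm _ _
  exact pow_dvd_of_le_emultiplicity ((ENat.add_le_add_iff_left (ENat.natCast_ne_top c)).1 hck)

theorem emultiplicity_prod_sub_of_pow_dvd {R ι : Type*} [CommRing R] [IsDomain R] {p y : R}
    {k : ℕ} {s : Finset ι} {f : ι → R} (hp : Prime p) (hy : p ^ k ∣ y)
    (hf : ∀ i ∈ s, ¬ p ^ k ∣ f i) :
    emultiplicity p (∏ i ∈ s, (y - f i)) = emultiplicity p (∏ i ∈ s, f i) := by
  rw [emultiplicity_prod hp, emultiplicity_prod hp]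
  refine sum_congr rfl fun i hi ↦ emultiplicity_sub_of_gt ?_
  exact (emultiplicity_lt_iff_not_dvd.2 (hf i hi)).trans_le (le_emultiplicity_of_pow_dvd hy)

end Prime

section Factorial

variable {R : Type*} [CommRing R]

theorem factorial_dvd_prod_range_sub [BinomialRing R] (y : R) (n : ℕ) :
    (n.factorial : R) ∣ ∏ z ∈ range n, (y - z) := by
  rw [← descPochhammer_eval_eq_prod_range, descPochhammer_eval_eq_ascPochhammer,
    ← Polynomial.ascPochhammer_smeval_eq_eval, ← Ring.factorial_nsmul_multichoose_eq_ascPochhammer,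
    nsmul_eq_mul]
  exact dvd_mul_right _ _

theorem factorial_dvd_prod_Ico_one_sub [BinomialRing R] (y : R) (n : ℕ) :
    (n.factorial : R) ∣ ∏ z ∈ Ico 1 (n + 1), (y - z) := by
  simpa [prod_Ico_eq_prod_range, sub_sub] using factorial_dvd_prod_range_sub (y - 1) n

theorem prod_range_sub_eq_mul_prod_Ico_one (y : R) {n : ℕ} (hn : n ≠ 0) :
    ∏ z ∈ range n, (y - z) = y * ∏ z ∈ Ico 1 n, (y - z) := by
  rw [range_eq_Ico, prod_eq_prod_Ico_succ_bot (Nat.pos_of_ne_zero hn)]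
  simp

end Factorial

section PrimePow

variable {p : ℕ}

theorem emultiplicity_factorial_prime_pow (hp : p.Prime) (k : ℕ) :
    emultiplicity p (p ^ k).factorial = ((∑ i ∈ range k, (p ^ i - 1) + k : ℕ) : ℕ∞) := by
  have hfin : FiniteMultiplicity p (p ^ k).factorial :=
    Nat.finiteMultiplicity_iff.2 ⟨hp.ne_one, Nat.factorial_pos _⟩
  have hsum : ∑ i ∈ range k, p ^ i = ∑ i ∈ range k, (p ^ i - 1) + k :=
    calc ∑ i ∈ range k, p ^ i
      _ = ∑ i ∈ range k, (p ^ i - 1 + 1) :=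
          sum_congr rfl fun i _ ↦ (Nat.sub_add_cancel (Nat.pow_pos hp.pos)).symm
      _ = ∑ i ∈ range k, (p ^ i - 1) + k := by simp [sum_add_distrib]
  rw [hfin.emultiplicity_eq_multiplicity, hp.multiplicity_factorial_pow, hsum]

theorem emultiplicity_factorial_prime_pow_sub_one (hp : p.Prime) (k : ℕ) :
    emultiplicity p (p ^ k - 1).factorial = ((∑ i ∈ range k, (p ^ i - 1) : ℕ) : ℕ∞) := by
  have h := emultiplicity_factorial_prime_pow hp k
  rw [← Nat.mul_factorial_pred (pow_ne_zero k hp.ne_zero), hp.emultiplicity_mul,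
    hp.emultiplicity_pow_self, Nat.cast_add, add_comm] at h
  exact WithTop.add_right_cancel (ENat.natCast_ne_top k) h

theorem emultiplicity_prod_Ico_one_sub_of_prime_pow_dvd (hp : p.Prime) {k : ℕ} {y : ℤ}
    (hy : (p : ℤ) ^ k ∣ y) :
    emultiplicity (p : ℤ) (∏ z ∈ Ico 1 (p ^ k), (y - z)) =
      ((∑ i ∈ range k, (p ^ i - 1) : ℕ) : ℕ∞) := by
  have hz : ∀ z ∈ Ico 1 (p ^ k), ¬ (p : ℤ) ^ k ∣ z := fun z hz ↦ by
    obtain ⟨hz_pos, hz_lt⟩ := mem_Ico.1 hz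
    exact_mod_cast Nat.not_dvd_of_pos_of_lt hz_pos hz_lt
  have hfact : ∏ z ∈ Ico 1 (p ^ k), z = (p ^ k - 1).factorial := by
    rw [← prod_Ico_id_eq_factorial, Nat.sub_add_cancel (Nat.pow_pos hp.pos)]
  rw [emultiplicity_prod_sub_of_pow_dvd (Nat.prime_iff_prime_int.1 hp) hy hz, ← Nat.cast_prod,
    hfact, Int.natCast_emultiplicity, emultiplicity_factorial_prime_pow_sub_one hp k]

theorem pow_sum_dvd_prod_Ico_one_sub (hp : p.Prime) (k : ℕ) (y : ℤ) :
    (p : ℤ) ^ (∑ i ∈ range k, (p ^ i - 1)) ∣ ∏ z ∈ Ico 1 (p ^ k), (y - z) := by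
  have hfact : (p : ℤ) ^ (∑ i ∈ range k, (p ^ i - 1)) ∣ (p ^ k - 1).factorial := by
    exact_mod_cast pow_dvd_of_le_emultiplicity (emultiplicity_factorial_prime_pow_sub_one hp k).ge
  have hprod := factorial_dvd_prod_Ico_one_sub y (p ^ k - 1)
  rw [Nat.sub_add_cancel (Nat.pow_pos hp.pos)] at hprod
  exact hfact.trans hprod

theorem pow_sum_add_dvd_mul_prod_Ico_one_sub (hp : p.Prime) (k : ℕ) (y : ℤ) :
    (p : ℤ) ^ (∑ i ∈ range k, (p ^ i - 1) + k) ∣ y * ∏ z ∈ Ico 1 (p ^ k), (y - z) := by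
  have hfact : (p : ℤ) ^ (∑ i ∈ range k, (p ^ i - 1) + k) ∣ (p ^ k).factorial := by
    exact_mod_cast pow_dvd_of_le_emultiplicity (emultiplicity_factorial_prime_pow hp k).ge
  have hprod := factorial_dvd_prod_range_sub y (p ^ k)
  rw [prod_range_sub_eq_mul_prod_Ico_one y (pow_ne_zero k hp.ne_zero)] at hprod
  exact hfact.trans hprod

end PrimePow

/-- For prime `p`, `k > 0` and `c = Σ_{i<k}(p^i − 1)`: (i) `p^c` divides
`∏_{0<z<p^k}(y − z)`, and (ii) `p^{c+1}` fails to divide this product iff `p^k ∣ y`. -/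
theorem pow_dvd_prod_sub (p k : ℕ) (hp : p.Prime) (hk : 0 < k) (y : ℤ) :
    ((p : ℤ) ^ (∑ i ∈ Finset.range k, (p ^ i - 1)) ∣
        ∏ z ∈ Finset.Ico 1 (p ^ k), (y - (z : ℤ)))
    ∧
    (¬ ((p : ℤ) ^ ((∑ i ∈ Finset.range k, (p ^ i - 1)) + 1) ∣
        ∏ z ∈ Finset.Ico 1 (p ^ k), (y - (z : ℤ)))
      ↔ (p : ℤ) ^ k ∣ y) := by
  refine ⟨pow_sum_dvd_prod_Ico_one_sub hp k y, fun hP ↦ ?_, fun hy ↦ ?_⟩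
  · exact pow_dvd_of_pow_add_dvd_mul (Nat.prime_iff_prime_int.1 hp)
      (pow_sum_add_dvd_mul_prod_Ico_one_sub hp k y) hP
  · rw [← emultiplicity_lt_iff_not_dvd, emultiplicity_prod_Ico_one_sub_of_prime_pow_dvd hp hy]
    exact_mod_cast Nat.lt_succ_self _
end

section
/- Let p be a prime and X = X_1 × ⋯ × X_n ⊆ ℤ^n a p-integral d-grid, i.e. each X_j ⊆ ℤ is finite nonempty with d_j := |X_j| − 1 and p does not divide x − x̃ for any distinct x, x̃ ∈ X_j. Let P_1,…,P_m ∈ ℤ[X_1,…,X_n] and let k_1,…,k_m > 0 be natural numbers with Σ_{i=1}^m (p^{k_i} − 1) · deg(P_i) < d_1 + ⋯ + d_n. Then the number of points x ∈ X such that p^{k_i} divides P_i(x) for every i = 1,…,m is not equal to 1. -/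
open MvPolynomial Finset

/-!
If `deg f < ∑ j, (#(X j) - 1)`, the product Lagrange weights annihilate the values of `f` on the
grid: every monomial has some exponent below `#(X j) - 1`, and the corresponding factor is a
vanishing moment of `X j`. When differences of distinct nodes are units the weights are units too,
so no single value of `f` can strictly dominate all the others `p`-adically.

The system `p ^ k i ∣ P i` is encoded in one polynomial of low degree by the product of the
binomials `(P i - 1).choose (p ^ k i - 1)`: modulo `p`, the function
`y ↦ (y - 1).choose (p ^ k - 1)` is `p ^ k`-periodic, vanishes at `1, …, p ^ k - 1` and equals `1`
at `p ^ k`, so it is the indicator function of `p ^ k ∣ y`. The value of the product at a unique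
solution would be its only `p`-adic unit value on the grid.
-/

section Grid

variable {σ ι K Γ₀ : Type*} [Field K] [LinearOrderedCommGroupWithZero Γ₀]

theorem sum_eval_mul_nodalWeight_eq_zero [DecidableEq ι] {s : Finset ι} {φ : ι → K}
    (hφ : Set.InjOn φ s) {f : Polynomial K} (hf : f.natDegree < #s - 1) :
    ∑ x ∈ s, f.eval (φ x) * Lagrange.nodalWeight s φ x = 0 := by
  have hdeg : f.degree < #s :=
    Polynomial.degree_le_natDegree.trans_lt (by exact_mod_cast hf.trans_le (Nat.sub_le _ _))
  simp only [Lagrange.nodalWeight, prod_inv_distrib, ← div_eq_mul_inv]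
  rw [← Lagrange.coeff_eq_sum hφ hdeg, Polynomial.coeff_eq_zero_of_natDegree_lt hf]

theorem valuation_nodalWeight_eq_one [DecidableEq ι] {v : Valuation K Γ₀} {s : Finset ι}
    {φ : ι → K} (hs : (s : Set ι).Pairwise fun x w ↦ v (φ x - φ w) = 1) {x : ι}
    (hx : x ∈ s) :
    v (Lagrange.nodalWeight s φ x) = 1 := by
  rw [Lagrange.nodalWeight, map_prod]
  refine prod_eq_one fun w hw ↦ ?_
  rw [map_inv₀, hs hx (mem_of_mem_erase hw) (ne_of_mem_erase hw).symm, inv_one]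

variable [Fintype σ] [DecidableEq σ]

theorem sum_piFinset_eval_mul_prod_nodalWeight_eq_zero [DecidableEq ι] {X : σ → Finset ι}
    {φ : ι → K} (hφ : ∀ j, Set.InjOn φ (X j)) {f : MvPolynomial σ K}
    (hf : f.totalDegree < ∑ j, (#(X j) - 1)) :
    ∑ x ∈ Fintype.piFinset X,
      eval (φ ∘ x) f * ∏ j, Lagrange.nodalWeight (X j) φ (x j) = 0 := by
  simp only [eval_eq', sum_mul]
  rw [sum_comm]
  refine sum_eq_zero fun e he ↦ ?_
  obtain ⟨j, -, hj⟩ : ∃ j ∈ univ, e j < #(X j) - 1 := by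
    refine exists_lt_of_sum_lt (lt_of_le_of_lt ?_ hf)
    rw [← Finsupp.sum_fintype e (fun _ c ↦ c) fun _ ↦ rfl]
    exact le_totalDegree he
  have hmoment : ∑ y ∈ X j, φ y ^ e j * Lagrange.nodalWeight (X j) φ y = 0 := by
    simpa using sum_eval_mul_nodalWeight_eq_zero (hφ j) (f := Polynomial.X ^ e j)
      (by simpa using hj)
  calc ∑ x ∈ Fintype.piFinset X,
        f.coeff e * (∏ j, (φ ∘ x) j ^ e j) * ∏ j, Lagrange.nodalWeight (X j) φ (x j)
      = f.coeff e * ∏ j, ∑ y ∈ X j, φ y ^ e j * Lagrange.nodalWeight (X j) φ y := by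
        simp only [prod_univ_sum, mul_sum, mul_assoc, prod_mul_distrib, Function.comp_apply]
    _ = 0 := by rw [prod_eq_zero (mem_univ j) hmoment, mul_zero]

theorem exists_ne_valuation_eval_le {v : Valuation K Γ₀} {X : σ → Finset ι} {φ : ι → K}
    (hX : ∀ j, (X j : Set ι).Pairwise fun x w ↦ v (φ x - φ w) = 1) {f : MvPolynomial σ K}
    (hf : f.totalDegree < ∑ j, (#(X j) - 1)) {x₀ : σ → ι} (hx₀ : x₀ ∈ Fintype.piFinset X)
    (hfx₀ : eval (φ ∘ x₀) f ≠ 0) :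
    ∃ x ∈ Fintype.piFinset X, x ≠ x₀ ∧ v (eval (φ ∘ x₀) f) ≤ v (eval (φ ∘ x) f) := by
  classical
  have hφ (j : σ) : Set.InjOn φ (X j) := fun x hx w hw hxw ↦ by
    by_contra hne
    simpa [hxw] using hX j hx hw hne
  have hterm : ∀ x ∈ Fintype.piFinset X,
      v (eval (φ ∘ x) f * ∏ j, Lagrange.nodalWeight (X j) φ (x j)) = v (eval (φ ∘ x) f) := by
    intro x hx
    rw [map_mul, map_prod, prod_eq_one fun j _ ↦
      valuation_nodalWeight_eq_one (hX j) (Fintype.mem_piFinset.1 hx j), mul_one]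
  by_contra! hlt
  refine v.ne_zero_iff.2 hfx₀ ?_
  have hdominant := v.map_sum_eq_of_lt hx₀ (f := fun x ↦
      eval (φ ∘ x) f * ∏ j, Lagrange.nodalWeight (X j) φ (x j)) fun x hx ↦ by
    obtain ⟨hx, hne⟩ := mem_sdiff.1 hx
    rw [hterm x hx, hterm x₀ hx₀]
    exact hlt x hx (notMem_singleton.1 hne)
  rw [← hterm x₀ hx₀, ← hdominant,
    sum_piFinset_eval_mul_prod_nodalWeight_eq_zero hφ hf, map_zero]

end Grid

section Choose

variable {p : ℕ} [Fact p.Prime] {k : ℕ}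

theorem periodic_intCast_choose {n : ℕ} (hn : n < p ^ k) :
    Function.Periodic (fun y : ℤ ↦ ((Ring.choose y n : ℤ) : ZMod p)) ((p ^ k : ℕ) : ℤ) := by
  intro y
  dsimp only
  rw [Ring.add_choose_eq n (Commute.all _ _), Int.cast_sum, sum_eq_single (n, 0)]
  · simp
  · rintro ⟨i, j⟩ hij hne
    obtain rfl : i + j = n := mem_antidiagonal.1 hij
    have hj : j ≠ 0 := by rintro rfl; exact hne rfl
    have hdvd : p ∣ (p ^ k).choose j := (Fact.out : p.Prime).dvd_choose_pow hj (by omega)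
    rw [Ring.choose_natCast, Int.cast_mul, Int.cast_natCast,
      (ZMod.natCast_eq_zero_iff _ _).2 hdvd, mul_zero]
  · simp

theorem not_dvd_choose_pow_sub_one_iff {y : ℤ} :
    ¬ (p : ℤ) ∣ Ring.choose y (p ^ k - 1) ↔ (p : ℤ) ^ k ∣ y + 1 := by
  have hq : 0 < p ^ k := pow_pos (Fact.out : p.Prime).pos k
  obtain ⟨r, t, hr, rfl⟩ : ∃ r : ℕ, ∃ t : ℤ, r < p ^ k ∧ y = r + t * (p ^ k : ℕ) := by
    obtain ⟨r, hr⟩ := Int.eq_ofNat_of_zero_le (Int.emod_nonneg y (b := (p ^ k : ℕ)) (by omega))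
    refine ⟨r, y / (p ^ k : ℕ), ?_, by rw [← hr, Int.emod_add_ediv_mul]⟩
    exact_mod_cast hr ▸ Int.emod_lt_of_pos y (by exact_mod_cast hq)
  have hchoose : ((Ring.choose (r + t * (p ^ k : ℕ) : ℤ) (p ^ k - 1) : ℤ) : ZMod p) =
      r.choose (p ^ k - 1) := by
    have hper := (periodic_intCast_choose (p := p) (Nat.sub_lt hq one_pos)).int_mul t r
    simpa only [Int.cast_id, Ring.choose_natCast, Int.cast_natCast] using hper
  have hdvd : (p : ℤ) ^ k ∣ r + t * (p ^ k : ℕ) + 1 ↔ r = p ^ k - 1 := by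
    rw [add_right_comm, ← Nat.cast_pow, dvd_add_left (dvd_mul_left _ _), ← Nat.cast_succ,
      Int.natCast_dvd_natCast]
    refine ⟨fun h ↦ ?_, fun h ↦ by rw [h, Nat.succ_eq_add_one, Nat.sub_add_cancel hq]⟩
    have hle := Nat.le_of_dvd r.succ_pos h
    omega
  rw [← ZMod.intCast_zmod_eq_zero_iff_dvd, hchoose, hdvd]
  rcases (Nat.le_sub_one_of_lt hr).lt_or_eq with hlt | rfl
  · simp only [Nat.choose_eq_zero_of_lt hlt, Nat.cast_zero, not_true_eq_false, hlt.ne]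
  · simp only [Nat.choose_self, Nat.cast_one, one_ne_zero, not_false_eq_true]

end Choose

section TotalDegree

variable {σ R : Type*}

theorem totalDegree_map_le {S : Type*} [CommSemiring R] [CommSemiring S] (g : R →+* S)
    (P : MvPolynomial σ R) : (MvPolynomial.map g P).totalDegree ≤ P.totalDegree :=
  sup_mono (support_map_subset g P)

theorem totalDegree_aeval_le {A : Type*} [CommSemiring A] [CommSemiring R] [Algebra A R]
    (q : Polynomial A) (P : MvPolynomial σ R) :
    (Polynomial.aeval P q).totalDegree ≤ q.natDegree * P.totalDegree := by
  rw [Polynomial.aeval_eq_sum_range]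
  refine totalDegree_finsetSum_le fun i hi ↦ ?_
  calc (q.coeff i • P ^ i).totalDegree
      ≤ (P ^ i).totalDegree := totalDegree_smul_le _ _
    _ ≤ i * P.totalDegree := totalDegree_pow P i
    _ ≤ q.natDegree * P.totalDegree := by gcongr; exact mem_range_succ_iff.1 hi

theorem totalDegree_choose_le [CommRing R] [Algebra ℚ≥0 R] (P : MvPolynomial σ R) (n : ℕ) :
    (Ring.choose P n).totalDegree ≤ n * P.totalDegree := by
  have hchoose : Ring.choose P n =
      (n.factorial : ℚ≥0)⁻¹ • Polynomial.aeval P (descPochhammer ℤ n) := by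
    rw [Polynomial.aeval_eq_smeval, Ring.descPochhammer_eq_factorial_smul_choose,
      ← Nat.cast_smul_eq_nsmul ℚ≥0, inv_smul_smul₀ (by exact_mod_cast n.factorial_ne_zero)]
  calc (Ring.choose P n).totalDegree
      ≤ (Polynomial.aeval P (descPochhammer ℤ n)).totalDegree := hchoose ▸ totalDegree_smul_le _ _
    _ ≤ n * P.totalDegree := by
      simpa only [descPochhammer_natDegree] using totalDegree_aeval_le (descPochhammer ℤ n) P

end TotalDegree

section Indicator

variable {σ ι : Type*} [Fintype ι]

/-- The indicator polynomial of the system `p ^ k i ∣ P i`: where the `P i` take integer values,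
its value is an integer, prime to `p` exactly at the solutions of the system. Its coefficients are
rational because the binomial coefficients are those of the `ℚ`-algebra `MvPolynomial σ ℚ`. -/
noncomputable def divisibilityIndicator (p : ℕ) (k : ι → ℕ) (P : ι → MvPolynomial σ ℚ) :
    MvPolynomial σ ℚ :=
  ∏ i, Ring.choose (P i - 1) (p ^ k i - 1)

theorem totalDegree_divisibilityIndicator_le (p : ℕ) (k : ι → ℕ) (P : ι → MvPolynomial σ ℚ) :
    (divisibilityIndicator p k P).totalDegree ≤ ∑ i, (p ^ k i - 1) * (P i).totalDegree := by
  refine (totalDegree_finsetProd _ _).trans (sum_le_sum fun i _ ↦ ?_)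
  calc (Ring.choose (P i - 1) (p ^ k i - 1)).totalDegree
      ≤ (p ^ k i - 1) * (P i - C 1).totalDegree := totalDegree_choose_le _ _
    _ ≤ (p ^ k i - 1) * (P i).totalDegree := by gcongr; exact totalDegree_sub_C_le (P i) 1

theorem eval_divisibilityIndicator (p : ℕ) (k : ι → ℕ) {P : ι → MvPolynomial σ ℚ}
    {x : σ → ℚ} {a : ι → ℤ} (ha : ∀ i, eval x (P i) = a i) :
    eval x (divisibilityIndicator p k P) =
      ((∏ i, Ring.choose (a i - 1) (p ^ k i - 1) : ℤ) : ℚ) := by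
  have hcast (b : ℤ) (n : ℕ) : Ring.choose (b : ℚ) n = (Ring.choose b n : ℤ) :=
    (Ring.map_choose (Int.castRingHom ℚ) b n).symm
  simp only [divisibilityIndicator, map_prod, Ring.map_choose, map_sub, map_one, ha,
    Int.cast_prod, ← hcast, Int.cast_sub, Int.cast_one]

theorem padicValuation_eval_divisibilityIndicator_eq_one_iff {p : ℕ} [Fact p.Prime] {k : ι → ℕ}
    {P : ι → MvPolynomial σ ℚ} {x : σ → ℚ} {a : ι → ℤ} (ha : ∀ i, eval x (P i) = a i) :
    Rat.padicValuation p (eval x (divisibilityIndicator p k P)) = 1 ↔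
      ∀ i, (p : ℤ) ^ k i ∣ a i := by
  have hp : Prime (p : ℤ) := Nat.prime_iff_prime_int.1 Fact.out
  simp only [eval_divisibilityIndicator p k ha, Rat.padicValuation_cast,
    Int.padicValuation_eq_one_iff, hp.dvd_finsetProd_iff, mem_univ, true_and, not_exists,
    not_dvd_choose_pow_sub_one_iff, sub_add_cancel]

end Indicator

theorem olson_generalization_general {σ ι : Type*} [Fintype σ] [Fintype ι]
    {p : ℕ} [Fact p.Prime] {X : σ → Finset ℤ}
    (hX : ∀ j, (X j : Set ℤ).Pairwise fun x w ↦ ¬ (p : ℤ) ∣ x - w)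
    {P : ι → MvPolynomial σ ℚ} {a : ι → (σ → ℤ) → ℤ}
    (ha : ∀ i x, (∀ j, x j ∈ X j) → eval ((↑) ∘ x) (P i) = a i x) {k : ι → ℕ}
    (hdeg : ∑ i, (p ^ k i - 1) * (P i).totalDegree < ∑ j, (#(X j) - 1)) :
    {x : σ → ℤ | (∀ j, x j ∈ X j) ∧ ∀ i, (p : ℤ) ^ k i ∣ a i x}.ncard ≠ 1 := by
  classical
  intro hcard
  obtain ⟨x₀, hsol⟩ := Set.ncard_eq_one.1 hcard
  obtain ⟨hx₀, hdvd⟩ := hsol.ge (Set.mem_singleton x₀)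
  have hone := (padicValuation_eval_divisibilityIndicator_eq_one_iff (ha · x₀ hx₀)).2 hdvd
  have hunit (j : σ) : (X j : Set ℤ).Pairwise fun x w ↦
      Rat.padicValuation p ((x : ℚ) - (w : ℚ)) = 1 := by
    simpa only [← Int.cast_sub, Rat.padicValuation_cast, Int.padicValuation_eq_one_iff] using hX j
  obtain ⟨x, hx, hne, hle⟩ := exists_ne_valuation_eval_le hunit
    ((totalDegree_divisibilityIndicator_le p k P).trans_lt hdeg) (Fintype.mem_piFinset.2 hx₀)
    ((Rat.padicValuation p).ne_zero_iff.1 (hone ▸ one_ne_zero))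
  replace hx := Fintype.mem_piFinset.1 hx
  have hle_one : Rat.padicValuation p (eval ((↑) ∘ x) (divisibilityIndicator p k P)) ≤ 1 := by
    rw [eval_divisibilityIndicator p k (ha · x hx), Rat.padicValuation_cast]
    exact Int.padicValuation_le_one p _
  exact hne (hsol.le ⟨hx, (padicValuation_eval_divisibilityIndicator_eq_one_iff (ha · x hx)).1
    (hle_one.antisymm (hone ▸ hle))⟩)

/-- Generalized Olson theorem: over a `p`-integral grid `X ⊆ ℤ^n`, if
`Σ_i (p^{k_i} − 1) deg(P_i) < Σ_j d_j`, then the set of grid points `x` with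
`p^{k_i} ∣ P_i(x)` for all `i` does not have exactly one element. -/
theorem olson_generalization (p : ℕ) (hp : p.Prime) {n m : ℕ}
    (X : Fin n → Finset ℤ) (hX : ∀ j, (X j).Nonempty)
    (d : Fin n → ℕ) (hd : ∀ j, d j = (X j).card - 1)
    (hpint : ∀ j, ∀ x ∈ X j, ∀ w ∈ X j, x ≠ w → ¬ (p : ℤ) ∣ (x - w))
    (P : Fin m → MvPolynomial (Fin n) ℤ) (k : Fin m → ℕ) (hk : ∀ i, 0 < k i)
    (hdeg : ∑ i, (p ^ (k i) - 1) * (P i).totalDegree < ∑ j, d j) :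
    {x : Fin n → ℤ | (∀ j, x j ∈ X j)
      ∧ ∀ i, ((p : ℤ) ^ (k i)) ∣ MvPolynomial.eval x (P i)}.ncard ≠ 1 := by
  have : Fact p.Prime := ⟨hp⟩
  simp only [hd] at hdeg
  exact olson_generalization_general (fun j x hx w hw ↦ hpint j x hx w hw)
    (fun i x _ ↦ (map_eval (Int.castRingHom ℚ) x (P i)).symm)
    (hdeg.trans_le' (by gcongr; exact totalDegree_map_le _ _))
end
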